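/- Let n ≥ 2 and let K ⊂ ℝ^{n+1} be a smooth, strictly convex body with the origin in its interior, whose support function h, radial function r, and Gauss curvature 𝒦 satisfy h^{p-1} |Dh|^{n+1-q} 𝒦 = 1 on S^n (equivalently h^{n+2}/𝒦 = h^{n+1+p} r^{n+1-q}). Set α = q − n − 1 and dV = h σ_n dμ with σ_n = 1/𝒦. Then (n+1+p) ∫ r^{2α} |∇̄h|² dV ≤ α(α+1) ∫ r^{2α} ⟨∇̄ log r, h ∇̄h⟩ dV + n |∫ r^{α} X dV|² / ∫ dV, where X = Dh and |·| denotes the Euclidean norm on ℝ^{n+1}. -/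

import Mathlib

open MeasureTheory Matrix Metric
open scoped RealInnerProductSpace

noncomputable section

/-- Euclidean space `ℝ^{n+1}`. -/
abbrev Euc (n : ℕ) : Type := EuclideanSpace ℝ (Fin (n + 1))

/-- The Euclidean Hessian matrix of `H : ℝ^{n+1} → ℝ` at `x`. -/
def ehess (n : ℕ) (H : Euc n → ℝ) (x : Euc n) : Matrix (Fin (n + 1)) (Fin (n + 1)) ℝ :=
  Matrix.of fun i j =>
    fderiv ℝ (fun y => fderiv ℝ H y (EuclideanSpace.single j 1)) x (EuclideanSpace.single i 1)

/-- For the 1-homogeneous extension `H` of the support function `h` and `x ∈ S^n`, the matrix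
`D²H(x) + h(x)·x xᵀ`.  Its restriction to the tangent space `x^⊥ = T_x S^n` is
`A[h] = ∇̄²h + h ḡ`, and `x` is an eigenvector with eigenvalue `h(x)`. -/
def bmat (n : ℕ) (H : Euc n → ℝ) (x : Euc n) : Matrix (Fin (n + 1)) (Fin (n + 1)) ℝ :=
  ehess n H x + Matrix.of fun i j => H x * (x i * x j)

/-- `σ_n = det A[h] = det(∇̄²h + h ḡ)/det ḡ`, computed as `det(bmat)/h`. -/
def sigman (n : ℕ) (H : Euc n → ℝ) (x : Euc n) : ℝ :=
  Matrix.det (bmat n H x) / H x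

/-- The Gauss curvature `𝒦 = 1/σ_n`. -/
def gaussCurv (n : ℕ) (H : Euc n → ℝ) (x : Euc n) : ℝ := (sigman n H x)⁻¹

/-- The round (spherical) gradient `∇̄f` at `x ∈ S^n`: the Euclidean gradient of the
0-homogeneous extension `y ↦ f(y/‖y‖)`.  It depends only on `f|_{S^n}` and lies in `T_x S^n`. -/
def sphGrad (n : ℕ) (f : Euc n → ℝ) (x : Euc n) : Euc n :=
  gradient (fun y => f (‖y‖⁻¹ • y)) x

/-- The function `log (h^{n+2}/𝒦)` (as a function of `y`; on the sphere it agrees with the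
centro-affine expression appearing in the paper). -/
def logQ (n : ℕ) (H : Euc n → ℝ) (y : Euc n) : ℝ :=
  Real.log ((H y) ^ (n + 2) / gaussCurv n H y)

/-- The centro-affine inner product `g(∇f, ∇u) = h ⟨A[h]⁻¹ ∇̄f, ∇̄u⟩` of the `g`-gradients of
`f` and `u`, where `g = A[h]/h` is the centro-affine metric. -/
def gInner (n : ℕ) (H f u : Euc n → ℝ) (x : Euc n) : ℝ :=
  H x * ∑ i, (bmat n H x)⁻¹.mulVec (fun j => sphGrad n f x j) i * sphGrad n u x i

/-- The squared centro-affine norm `|∇f|_g²` of the `g`-gradient of `f`. -/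
def gNormSq (n : ℕ) (H f : Euc n → ℝ) (x : Euc n) : ℝ := gInner n H f f x

/-- The centro-affine Laplacian `Δf = div_g(∇ f)` (with respect to the centro-affine connection
`∇` induced by the centro-affine normal `ξ = X`, and the centro-affine metric `g = A[h]/h`),
computed via the identity `Δf = tr_g(A[hf]/h) - n f`, i.e.
`Δf = tr(B[h]⁻¹ B[hf]) - (n+1) f` where `B[u] = D²ũ + u·x xᵀ` for the 1-homogeneous
extension `ũ` of `u`. -/
def caLap (n : ℕ) (H f : Euc n → ℝ) (x : Euc n) : ℝ :=
  Matrix.trace ((bmat n H x)⁻¹ * bmat n (fun y => H y * f (‖y‖⁻¹ • y)) x) - (n + 1) * f x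

/-- The spherical Lebesgue measure on `S^n ⊂ ℝ^{n+1}` (up to a positive constant). -/
def sphMeasure (n : ℕ) : Measure (sphere (0 : Euc n) 1) :=
  (volume : Measure (Euc n)).toSphere

/-- The density of the cone-volume-type measure `dV = h σ_n dμ` with respect to the spherical
Lebesgue measure. -/
def volDens (n : ℕ) (H : Euc n → ℝ) (x : Euc n) : ℝ := H x * sigman n H x

open MeasureTheory Matrix Metric
open scoped RealInnerProductSpace
open scoped ENNReal

theorem bm1_compact {A B : Set ℝ} (hA : IsCompact A) (hB : IsCompact B) (hA0 : A.Nonempty)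
    (hB0 : B.Nonempty) {C : Set ℝ} (h : ∀ a ∈ A, ∀ b ∈ B, (a + b) / 2 ∈ C) :
    volume A + volume B ≤ 2 * volume C := by
  set a1 := sSup A
  set b0 := sInf B
  have ha1 : a1 ∈ A := hA.sSup_mem hA0
  have hb0 : b0 ∈ B := hB.sInf_mem hB0
  set A' := (fun x : ℝ => x + b0) '' A
  set B' := (fun x : ℝ => x + a1) '' B
  have hA' : volume A' = volume A := by
    simp only [A', Set.image_add_right]
    exact measure_preimage_add_right volume (-b0) A
  have hB' : volume B' = volume B := by
    simp only [B', Set.image_add_right]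
    exact measure_preimage_add_right volume (-a1) B
  have hmB : MeasurableSet B' := (hB.image (by fun_prop)).measurableSet
  have hd : AEDisjoint volume A' B' := by
    have : A' ∩ B' ⊆ {a1 + b0} := by
      rintro z ⟨⟨a, ha, rfl⟩, ⟨b, hb, hz⟩⟩
      have h1 : a ≤ a1 := le_csSup hA.bddAbove ha
      have h2 : b0 ≤ b := csInf_le hB.bddBelow hb
      simp only at hz ⊢
      simp only [Set.mem_singleton_iff]
      linarith
    exact measure_mono_null this (by simp)
  have hsub : A' ∪ B' ⊆ (fun x : ℝ => x * 2⁻¹) ⁻¹' C := by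
    rintro z (⟨a, ha, rfl⟩ | ⟨b, hb, rfl⟩)
    · exact h a ha b0 hb0
    · have := h a1 ha1 b hb
      rw [add_comm] at this
      exact this
  have hC : volume ((fun x : ℝ => x * 2⁻¹) ⁻¹' C) = 2 * volume C := by
    rw [Real.volume_preimage_mul_right (by norm_num)]
    simp
  rw [← hA', ← hB', ← measure_union₀ hmB.nullMeasurableSet hd, ← hC]
  exact measure_mono hsub

theorem bm1 {A B : Set ℝ} (hA : MeasurableSet A) (hB : MeasurableSet B) (hA0 : A.Nonempty)
    (hB0 : B.Nonempty) {C : Set ℝ} (h : ∀ a ∈ A, ∀ b ∈ B, (a + b) / 2 ∈ C) :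
    volume A + volume B ≤ 2 * volume C := by
  obtain ⟨a, ha⟩ := hA0
  obtain ⟨b, hb⟩ := hB0
  have key : ∀ A' ⊆ A, IsCompact A' → ∀ B' ⊆ B, IsCompact B' →
      volume A' + volume B' ≤ 2 * volume C := by
    intro A' hAA hA' B' hBB hB'
    have := bm1_compact (hA'.insert a) (hB'.insert b) ⟨a, by simp⟩ ⟨b, by simp⟩ (C := C) (by
      intro x hx y hy
      refine h x ?_ y ?_
      · rcases hx with rfl | hx
        · exact ha
        · exact hAA hx
      · rcases hy with rfl | hy
        · exact hb
        · exact hBB hy)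
    refine le_trans ?_ this
    gcongr
    · exact Set.subset_insert _ _
    · exact Set.subset_insert _ _
  rw [hA.measure_eq_iSup_isCompact, hB.measure_eq_iSup_isCompact]
  simp only [iSup_and']
  refine ENNReal.biSup_add_biSup_le' (p := fun K => K ⊆ A ∧ IsCompact K)
    (q := fun K => K ⊆ B ∧ IsCompact K) ⟨∅, by simp⟩ ⟨∅, by simp⟩ ?_
  rintro A' ⟨h1, h2⟩ B' ⟨h3, h4⟩
  exact key A' h1 h2 B' h3 h4

theorem ennreal_amgm {a b c : ℝ≥0∞} (h : a + b ≤ 2 * c) : a * b ≤ c ^ 2 := by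
  by_cases hc : c = ⊤
  · simp [hc]
  have h2 : 2 * c ≠ ⊤ := ENNReal.mul_ne_top (by simp) hc
  have hab : a + b ≠ ⊤ := ne_top_of_le_ne_top h2 h
  have ha : a ≠ ⊤ := fun h => hab (by simp [h])
  have hb : b ≠ ⊤ := fun h => hab (by simp [h])
  lift a to NNReal using ha
  lift b to NNReal using hb
  lift c to NNReal using hc
  norm_cast at h ⊢
  have h' : (a : ℝ) + b ≤ 2 * c := by exact_mod_cast h
  have : (a : ℝ) * b ≤ c ^ 2 := by nlinarith [sq_nonneg ((a : ℝ) - b), a.2, b.2, c.2]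
  exact_mod_cast this

theorem pl1_norm {u v w : ℝ → ℝ≥0∞} (hu : Measurable u) (hv : Measurable v) (hw : Measurable w)
    (hu1 : ⨆ x, u x = 1) (hv1 : ⨆ x, v x = 1)
    (h : ∀ x y, u x * v y ≤ w ((x + y) / 2) ^ 2) :
    (∫⁻ x, u x) + (∫⁻ x, v x) ≤ 2 * ∫⁻ x, w x := by
  have hule : ∀ x, u x ≤ 1 := fun x => hu1 ▸ le_iSup u x
  have hvle : ∀ x, v x ≤ 1 := fun x => hv1 ▸ le_iSup v x
  set w' : ℝ → ℝ≥0∞ := fun x => min (w x) 1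
  have hw' : Measurable w' := hw.min measurable_const
  have key : ∀ f : ℝ → ℝ≥0∞, Measurable f → (∀ x, f x ≤ 1) →
      ∫⁻ x, f x = ∫⁻ t in Set.Ioi (0:ℝ), volume {x | ENNReal.ofReal t < f x} := by
    intro f hf hf1
    have hft : ∀ x, f x ≠ ⊤ := fun x => ne_top_of_le_ne_top ENNReal.one_ne_top (hf1 x)
    have := lintegral_eq_lintegral_meas_lt volume (f := fun x => (f x).toReal)
      (Filter.Eventually.of_forall fun x => ENNReal.toReal_nonneg) hf.ennreal_toReal.aemeasurable
    simp only [ENNReal.ofReal_toReal (hft _)] at this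
    rw [this]
    refine setLIntegral_congr_fun measurableSet_Ioi fun t ht => ?_
    congr 1
    ext x
    simp only [Set.mem_ofPred_eq]
    rw [ENNReal.ofReal_lt_iff_lt_toReal (le_of_lt ht) (hft x)]
  have hm : ∀ f : ℝ → ℝ≥0∞, Measurable f →
      Measurable fun t : ℝ => volume {x | ENNReal.ofReal t < f x} := by
    intro f hf
    refine Antitone.measurable fun s t hst => measure_mono fun x hx => ?_
    exact lt_of_le_of_lt (ENNReal.ofReal_le_ofReal hst) hx
  have hww : ∫⁻ x, w' x ≤ ∫⁻ x, w x := lintegral_mono fun x => min_le_left _ _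
  refine le_trans ?_ (mul_le_mul_right hww 2)
  rw [key u hu hule, key v hv hvle, key w' hw' (fun x => min_le_right _ _),
    ← lintegral_add_left (hm u hu), ← lintegral_const_mul _ (hm w' hw')]
  refine lintegral_mono fun t => ?_
  simp only
  by_cases ht : ENNReal.ofReal t < 1
  · refine bm1 (measurableSet_lt measurable_const hu) (measurableSet_lt measurable_const hv) ?_ ?_ ?_
    · rw [← hu1] at ht
      exact lt_iSup_iff.1 ht
    · rw [← hv1] at ht
      exact lt_iSup_iff.1 ht
    · intro a ha b hb
      simp only [Set.mem_ofPred_eq, w', lt_min_iff] at ha hb ⊢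
      refine ⟨?_, ht⟩
      have h1 := h a b
      have h2 : ENNReal.ofReal t ^ 2 < u a * v b := by
        rw [sq]; exact ENNReal.mul_lt_mul ha hb
      exact (ENNReal.pow_lt_pow_left_iff two_ne_zero).1 (h2.trans_le h1)
  · have h1 : ∀ f : ℝ → ℝ≥0∞, (∀ x, f x ≤ 1) → volume {x | ENNReal.ofReal t < f x} = 0 := by
      intro f hf
      have : {x | ENNReal.ofReal t < f x} = ∅ := by
        ext x
        simp only [Set.mem_ofPred_eq, Set.mem_empty_iff_false, iff_false]
        exact fun hx => ht (hx.trans_le (hf x))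
      simp [this]
    rw [h1 u hule, h1 v hvle]
    simp

theorem pl1_bdd {u v w : ℝ → ℝ≥0∞} (hu : Measurable u) (hv : Measurable v) (hw : Measurable w)
    (hu1 : ⨆ x, u x ≠ ⊤) (hv1 : ⨆ x, v x ≠ ⊤)
    (h : ∀ x y, u x * v y ≤ w ((x + y) / 2) ^ 2) :
    (∫⁻ x, u x) * (∫⁻ x, v x) ≤ (∫⁻ x, w x) ^ 2 := by
  set S := ⨆ x, u x with hS
  set T := ⨆ x, v x with hT
  by_cases hS0 : S = 0
  · have : ∀ x, u x = 0 := fun x => le_antisymm (hS0 ▸ le_iSup u x) bot_le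
    simp [this]
  by_cases hT0 : T = 0
  · have : ∀ x, v x = 0 := fun x => le_antisymm (hT0 ▸ le_iSup v x) bot_le
    simp [this]
  set R : ℝ≥0∞ := (S * T) ^ (1/2 : ℝ) with hR
  have hR2 : R ^ 2 = S * T := by
    rw [hR, ← ENNReal.rpow_natCast, ← ENNReal.rpow_mul]; norm_num
  have hST0 : S * T ≠ 0 := mul_ne_zero hS0 hT0
  have hSTt : S * T ≠ ⊤ := ENNReal.mul_ne_top hu1 hv1
  have hR0 : R ≠ 0 := by
    intro h0; rw [h0] at hR2; simp at hR2; tauto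
  have hRt : R ≠ ⊤ := by
    intro h0; rw [h0] at hR2; simp at hR2; exact hSTt hR2.symm
  have := pl1_norm (u := fun x => S⁻¹ * u x) (v := fun x => T⁻¹ * v x) (w := fun x => R⁻¹ * w x)
    (hu.const_mul _) (hv.const_mul _) (hw.const_mul _)
    (by rw [← ENNReal.mul_iSup, ← hS, ENNReal.inv_mul_cancel hS0 hu1])
    (by rw [← ENNReal.mul_iSup, ← hT, ENNReal.inv_mul_cancel hT0 hv1])
    (by
      intro x y
      rw [mul_pow, ← ENNReal.inv_pow, hR2, ENNReal.mul_inv (Or.inl hS0) (Or.inl hu1)]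
      calc _ = S⁻¹ * T⁻¹ * (u x * v y) := by ring
        _ ≤ _ := by gcongr; exact h x y)
  rw [lintegral_const_mul _ hu, lintegral_const_mul _ hv, lintegral_const_mul _ hw] at this
  have h3 := ennreal_amgm this
  have h4 : (S * T) * ((S⁻¹ * ∫⁻ x, u x) * (T⁻¹ * ∫⁻ x, v x)) ≤
      (S * T) * (R⁻¹ * ∫⁻ x, w x) ^ 2 := by gcongr
  rw [mul_pow, ← ENNReal.inv_pow, hR2, ← mul_assoc (S * T) (S * T)⁻¹, ENNReal.mul_inv_cancel hST0 hSTt,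
    one_mul] at h4
  refine le_trans (le_of_eq ?_) h4
  calc _ = (S * S⁻¹) * (T * T⁻¹) * ((∫⁻ x, u x) * (∫⁻ x, v x)) := by
        rw [ENNReal.mul_inv_cancel hS0 hu1, ENNReal.mul_inv_cancel hT0 hv1]; ring
    _ = _ := by ring

theorem lintegral_trunc {u : ℝ → ℝ≥0∞} (hu : Measurable u) :
    ∫⁻ x, u x = ⨆ m : ℕ, ∫⁻ x, min (u x) m := by
  rw [← lintegral_iSup (fun m => hu.min measurable_const)]
  · congr 1
    ext x
    apply le_antisymm
    · rw [← inf_iSup_eq (u x), ENNReal.iSup_natCast]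
      simp
    · exact iSup_le fun m => min_le_left _ _
  · intro m k hmk x
    simp only
    gcongr

theorem pl1 {u v w : ℝ → ℝ≥0∞} (hu : Measurable u) (hv : Measurable v) (hw : Measurable w)
    (h : ∀ x y, u x * v y ≤ w ((x + y) / 2) ^ 2) :
    (∫⁻ x, u x) * (∫⁻ x, v x) ≤ (∫⁻ x, w x) ^ 2 := by
  have key : ∀ m k : ℕ, (∫⁻ x, min (u x) m) * (∫⁻ x, min (v x) k) ≤ (∫⁻ x, w x) ^ 2 := by
    intro m k
    refine pl1_bdd (hu.min measurable_const) (hv.min measurable_const) hw ?_ ?_ ?_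
    · exact ne_top_of_le_ne_top (ENNReal.natCast_ne_top m) (iSup_le fun x => min_le_right _ _)
    · exact ne_top_of_le_ne_top (ENNReal.natCast_ne_top k) (iSup_le fun x => min_le_right _ _)
    · intro x y
      refine le_trans ?_ (h x y)
      gcongr
      · exact min_le_left _ _
      · exact min_le_left _ _
  rw [lintegral_trunc hu, lintegral_trunc hv, ENNReal.iSup_mul]
  refine iSup_le fun m => ?_
  rw [ENNReal.mul_iSup]
  exact iSup_le fun k => key m k

theorem pln (n : ℕ) : ∀ {u v w : (Fin n → ℝ) → ℝ≥0∞} (_ : Measurable u) (_ : Measurable v)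
    (_ : Measurable w) (_ : ∀ x y, u x * v y ≤ w (fun i => (x i + y i) / 2) ^ 2),
    (∫⁻ x, u x) * (∫⁻ x, v x) ≤ (∫⁻ x, w x) ^ 2 := by
  induction n with
  | zero =>
    intro u v w hu hv hw h
    have : ∀ f : (Fin 0 → ℝ) → ℝ≥0∞, ∫⁻ x, f x = f default := by
      intro f
      rw [lintegral_unique]
      simp only [volume_pi, Measure.pi_univ, Finset.univ_eq_empty, Finset.prod_empty, mul_one]
      exact congrArg f (Subsingleton.elim _ _)
    rw [this, this, this]
    exact (h default default).trans (le_of_eq (by congr 2; exact Subsingleton.elim _ _))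
  | succ n ih =>
    intro u v w hu hv hw h
    set e := MeasurableEquiv.piFinSuccAbove (fun _ : Fin (n+1) => ℝ) 0
    have he := (volume_preserving_piFinSuccAbove (fun _ : Fin (n+1) => ℝ) 0).symm
    have key : ∀ f : (Fin (n+1) → ℝ) → ℝ≥0∞, Measurable f →
        ∫⁻ x, f x = ∫⁻ s : ℝ, ∫⁻ z : Fin n → ℝ, f (e.symm (s, z)) := by
      intro f hf
      rw [← he.lintegral_comp hf]
      exact lintegral_prod _ (hf.comp e.symm.measurable).aemeasurable
    have hm : ∀ f : (Fin (n+1) → ℝ) → ℝ≥0∞, Measurable f →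
        Measurable fun s : ℝ => ∫⁻ z : Fin n → ℝ, f (e.symm (s, z)) := by
      intro f hf
      exact (hf.comp e.symm.measurable).lintegral_prod_right'
    rw [key u hu, key v hv, key w hw]
    refine pl1 (hm u hu) (hm v hv) (hm w hw) fun s t => ?_
    refine ih (u := fun z => u (e.symm (s, z))) (v := fun z => v (e.symm (t, z)))
      (w := fun z => w (e.symm ((s + t) / 2, z))) ?_ ?_ ?_ ?_
    · exact hu.comp (e.symm.measurable.comp measurable_prodMk_left)
    · exact hv.comp (e.symm.measurable.comp measurable_prodMk_left)
    · exact hw.comp (e.symm.measurable.comp measurable_prodMk_left)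
    · intro x y
      refine (h _ _).trans (le_of_eq ?_)
      congr 2
      ext i
      refine Fin.cases ?_ (fun j => ?_) i
      · simp [e, MeasurableEquiv.piFinSuccAbove]
      · simp [e, MeasurableEquiv.piFinSuccAbove]

theorem bmn (n : ℕ) {A B C : Set (Euc n)} (hA : MeasurableSet A) (hB : MeasurableSet B)
    (hC : MeasurableSet C) (h : ∀ a ∈ A, ∀ b ∈ B, (1/2 : ℝ) • (a + b) ∈ C) :
    volume A * volume B ≤ volume C ^ 2 := by
  set e := MeasurableEquiv.toLp 2 (Fin (n+1) → ℝ)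
  have he : MeasurePreserving e volume volume :=
    (EuclideanSpace.volume_preserving_symm_measurableEquiv_toLp (Fin (n+1))).symm
  have key : ∀ D : Set (Euc n), MeasurableSet D → volume D = ∫⁻ x, (e ⁻¹' D).indicator 1 x := by
    intro D hD
    rw [lintegral_indicator_one (e.measurable hD), he.measure_preimage hD.nullMeasurableSet]
  rw [key A hA, key B hB, key C hC]
  refine pln (n+1) (measurable_one.indicator (e.measurable hA)) (measurable_one.indicator (e.measurable hB))
    (measurable_one.indicator (e.measurable hC)) fun x y => ?_
  by_cases hx : x ∈ e ⁻¹' A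
  · by_cases hy : y ∈ e ⁻¹' B
    · have : (fun i => (x i + y i) / 2) ∈ e ⁻¹' C := by
        have := h _ hx _ hy
        simp only [Set.mem_preimage]
        convert this using 1
        ext i
        simp [e]
        ring
      simp [hx, hy, this]
    · simp [hy]
  · simp [hx]

open MeasureTheory Matrix Metric
open scoped RealInnerProductSpace
open scoped ENNReal
open scoped Topology

theorem two_le_inf : (2 : WithTop ℕ∞) ≤ ((⊤ : ℕ∞) : WithTop ℕ∞) :=
  WithTop.coe_le_coe.2 (le_top : (2 : ℕ∞) ≤ ⊤)

structure Body (n : ℕ) (H : Euc n → ℝ) : Prop where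
  homog : ∀ c : ℝ, 0 < c → ∀ x : Euc n, H (c • x) = c * H x
  conv : ConvexOn ℝ Set.univ H
  smooth : ContDiffOn ℝ (⊤ : ℕ∞) H {(0 : Euc n)}ᶜ
  pos : ∀ x ∈ sphere (0 : Euc n) 1, 0 < H x
  posdef : ∀ x ∈ sphere (0 : Euc n) 1, (bmat n H x).PosDef

/-- derivative of the gradient. -/
noncomputable def hessL (n : ℕ) (H : Euc n → ℝ) (x : Euc n) : Euc n →L[ℝ] Euc n :=
  fderiv ℝ (gradient H) x

theorem sphere_ne {n : ℕ} {x : Euc n} (hx : x ∈ sphere (0 : Euc n) 1) : x ≠ 0 := by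
  rintro rfl; simp at hx

namespace Body
variable {n : ℕ} {H : Euc n → ℝ}

theorem contDiffAt (b : Body n H) {x : Euc n} (hx : x ≠ 0) : ContDiffAt ℝ (⊤ : ℕ∞) H x :=
  b.smooth.contDiffAt (isOpen_compl_singleton.mem_nhds hx)

theorem hpos (b : Body n H) {x : Euc n} (hx : x ≠ 0) : 0 < H x := by
  have h0 : 0 < ‖x‖ := norm_pos_iff.2 hx
  have h1 : x = ‖x‖ • (‖x‖⁻¹ • x) := by rw [smul_smul, mul_inv_cancel₀ h0.ne', one_smul]
  rw [h1, b.homog _ h0]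
  refine mul_pos h0 (b.pos _ ?_)
  simp [norm_smul, h0.ne']

theorem hasFDerivAt (b : Body n H) {x : Euc n} (hx : x ≠ 0) :
    HasFDerivAt H (innerSL ℝ (gradient H x)) x := by
  have h := ((b.contDiffAt hx).differentiableAt (by simp)).hasGradientAt
  exact h.hasFDerivAt

theorem grad_contDiffAt (b : Body n H) {x : Euc n} (hx : x ≠ 0) :
    ContDiffAt ℝ (⊤ : ℕ∞) (gradient H) x := by
  have h : ContDiffAt ℝ (⊤ : ℕ∞) (fderiv ℝ H) x := (b.contDiffAt hx).fderiv_right (by simp)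
  exact (InnerProductSpace.toDual ℝ (Euc n)).symm.contDiff.contDiffAt.comp x h

theorem grad_hasFDerivAt (b : Body n H) {x : Euc n} (hx : x ≠ 0) :
    HasFDerivAt (gradient H) (hessL n H x) x :=
  ((b.grad_contDiffAt hx).differentiableAt (by simp)).hasFDerivAt

theorem grad_strict (b : Body n H) {x : Euc n} (hx : x ≠ 0) :
    HasStrictFDerivAt (gradient H) (hessL n H x) x :=
  (b.grad_contDiffAt hx).hasStrictFDerivAt (by simp)

theorem hessL_contDiffAt (b : Body n H) {x : Euc n} (hx : x ≠ 0) :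
    ContDiffAt ℝ (⊤ : ℕ∞) (hessL n H) x := (b.grad_contDiffAt hx).fderiv_right (by simp)

theorem grad_homog (b : Body n H) {c : ℝ} (hc : 0 < c) {x : Euc n} (hx : x ≠ 0) :
    gradient H (c • x) = gradient H x := by
  have hcx : c • x ≠ 0 := smul_ne_zero hc.ne' hx
  have h1 : HasFDerivAt (fun y => H (c • y)) ((innerSL ℝ (gradient H (c • x))).comp
      (c • ContinuousLinearMap.id ℝ (Euc n))) x :=
    HasFDerivAt.comp x (b.hasFDerivAt hcx) ((hasFDerivAt_id x).const_smul c)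
  have h2 : HasFDerivAt (fun y => H (c • y)) (c • innerSL ℝ (gradient H x)) x := by
    simp_rw [b.homog c hc]
    exact (b.hasFDerivAt hx).const_mul c
  have h3 := h1.unique h2
  refine ext_inner_right ℝ fun v => ?_
  have h4 := congrArg (fun f => f v) h3
  simp only [ContinuousLinearMap.comp_apply, _root_.smul_apply, ContinuousLinearMap.id_apply, innerSL_apply_apply, inner_smul_right, smul_eq_mul] at h4
  exact mul_left_cancel₀ hc.ne' h4

theorem euler (b : Body n H) {x : Euc n} (hx : x ≠ 0) : ⟪gradient H x, x⟫ = H x := by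
  have h1 : HasDerivAt (fun t : ℝ => H (t • x)) (⟪gradient H ((1:ℝ) • x), (1:ℝ) • x⟫) 1 := by
    have := (b.hasFDerivAt (x := (1:ℝ) • x) (by simpa using hx)).comp_hasDerivAt (1:ℝ)
      ((hasDerivAt_id (1:ℝ)).smul_const x)
    simpa [Function.comp_def] using this
  have h2 : HasDerivAt (fun t : ℝ => H (t • x)) (H x) 1 := by
    have h3 : HasDerivAt (fun t : ℝ => t * H x) (H x) 1 := by
      simpa using (hasDerivAt_id (1:ℝ)).mul_const (H x)
    refine h3.congr_of_eventuallyEq ?_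
    filter_upwards [lt_mem_nhds (zero_lt_one' ℝ)] with t ht
    exact b.homog t ht x
  simpa using h1.unique h2

theorem hessL_self (b : Body n H) {x : Euc n} (hx : x ≠ 0) : hessL n H x x = 0 := by
  have h1 : HasDerivAt (fun t : ℝ => gradient H (t • x)) (hessL n H ((1:ℝ) • x) ((1:ℝ) • x)) 1 := by
    have := (b.grad_hasFDerivAt (x := (1:ℝ) • x) (by simpa using hx)).comp_hasDerivAt (1:ℝ)
      ((hasDerivAt_id (1:ℝ)).smul_const x)
    simpa [Function.comp_def] using this
  have h2 : HasDerivAt (fun t : ℝ => gradient H (t • x)) 0 1 := by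
    refine (hasDerivAt_const (1:ℝ) (gradient H x)).congr_of_eventuallyEq ?_
    filter_upwards [lt_mem_nhds (zero_lt_one' ℝ)] with t ht
    exact b.grad_homog ht hx
  simpa using h1.unique h2

theorem fderiv_apply (b : Body n H) {x : Euc n} (hx : x ≠ 0) (v : Euc n) :
    fderiv ℝ H x v = ⟪gradient H x, v⟫ := by
  rw [(b.hasFDerivAt hx).fderiv]; simp

theorem ev_ne {x : Euc n} (hx : x ≠ 0) : ∀ᶠ y in 𝓝 x, y ≠ 0 := isOpen_ne.mem_nhds hx

theorem fderiv2 (b : Body n H) {x : Euc n} (hx : x ≠ 0) (u v : Euc n) :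
    fderiv ℝ (fun y => fderiv ℝ H y v) x u = ⟪hessL n H x u, v⟫ := by
  have h1 : HasFDerivAt (fun y => ⟪gradient H y, v⟫) _ x :=
    (b.grad_hasFDerivAt hx).inner ℝ (hasFDerivAt_const v x)
  have h2 : (fun y => fderiv ℝ H y v) =ᶠ[𝓝 x] (fun y => ⟪gradient H y, v⟫) := by
    filter_upwards [ev_ne hx] with y hy
    exact b.fderiv_apply hy v
  rw [h2.fderiv_eq, h1.fderiv]
  simp

theorem hessL_symm (b : Body n H) {x : Euc n} (hx : x ≠ 0) (u v : Euc n) :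
    ⟪hessL n H x u, v⟫ = ⟪u, hessL n H x v⟫ := by
  have h := (b.contDiffAt hx).isSymmSndFDerivAt (by simp only [minSmoothness_of_isRCLikeNormedField]; exact two_le_inf)
  have key : ∀ u v : Euc n, fderiv ℝ (fderiv ℝ H) x u v = ⟪hessL n H x u, v⟫ := by
    intro u v
    rw [← b.fderiv2 hx]
    have hd : DifferentiableAt ℝ (fderiv ℝ H) x :=
      ((b.contDiffAt hx).fderiv_right (m := 1) (by rw [one_add_one_eq_two]; exact two_le_inf)).differentiableAt (by simp)
    rw [fderiv_clm_apply hd (differentiableAt_const v)]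
    simp
  rw [← key, h.eq u v, key, real_inner_comm]

theorem ehess_apply (b : Body n H) {x : Euc n} (hx : x ≠ 0) (i j : Fin (n+1)) :
    ehess n H x i j = hessL n H x (EuclideanSpace.single i 1) j := by
  simp only [ehess, Matrix.of_apply]
  rw [b.fderiv2 hx]
  simp [EuclideanSpace.inner_single_right]

theorem hessL_homog (b : Body n H) {c : ℝ} (hc : 0 < c) {x : Euc n} (hx : x ≠ 0) :
    hessL n H (c • x) = c⁻¹ • hessL n H x := by
  have hcx : c • x ≠ 0 := smul_ne_zero hc.ne' hx
  have h1 : HasFDerivAt (fun y => gradient H (c • y)) ((hessL n H (c • x)).comp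
      (c • ContinuousLinearMap.id ℝ (Euc n))) x :=
    HasFDerivAt.comp x (b.grad_hasFDerivAt hcx) ((hasFDerivAt_id x).const_smul c)
  have h2 : HasFDerivAt (fun y => gradient H (c • y)) (hessL n H x) x := by
    refine (b.grad_hasFDerivAt hx).congr_of_eventuallyEq ?_
    filter_upwards [ev_ne hx] with y hy
    exact b.grad_homog hc hy
  have h3 := h1.unique h2
  rw [← h3]
  ext v
  simp [smul_smul, hc.ne']

theorem sum_basis (u : Euc n) : u = ∑ i, u i • EuclideanSpace.single i (1:ℝ) := by
  ext j
  simp [Finset.sum_apply, Pi.single_apply]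

theorem bmat_quad (b : Body n H) {x : Euc n} (hx : x ≠ 0) (u v : Euc n) :
    (fun i => u i) ⬝ᵥ (bmat n H x *ᵥ fun i => v i) = ⟪hessL n H x u, v⟫ + H x * (⟪x, u⟫ * ⟪x, v⟫) := by
  have h1 : hessL n H x u = ∑ i, u i • hessL n H x (EuclideanSpace.single i (1:ℝ)) := by
    conv_lhs => rw [sum_basis u]
    simp [map_sum]
  rw [h1]
  simp only [PiLp.inner_apply, dotProduct, mulVec, bmat, Matrix.add_apply, Matrix.of_apply,
    b.ehess_apply hx, add_mul, Finset.sum_add_distrib, mul_add]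
  congr 1
  · simp [Finset.sum_apply, Finset.mul_sum]
    rw [Finset.sum_comm]
    refine Finset.sum_congr rfl fun i _ => Finset.sum_congr rfl fun j _ => by ring
  · simp only [RCLike.inner_apply, conj_trivial]
    rw [Finset.sum_mul_sum, Finset.mul_sum]
    refine Finset.sum_congr rfl fun i _ => ?_
    rw [Finset.mul_sum, Finset.mul_sum]
    refine Finset.sum_congr rfl fun j _ => by ring

theorem quad_coercive (b : Body n H) {x : Euc n} (hx : x ∈ sphere (0 : Euc n) 1) :
    ∃ c > 0, ∀ u : Euc n, c * ‖u‖ ^ 2 ≤ ⟪hessL n H x u, u⟫ + H x * ⟪x, u⟫ ^ 2 := by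
  have hx0 := sphere_ne hx
  set Q : Euc n → ℝ := fun u => ⟪hessL n H x u, u⟫ + H x * ⟪x, u⟫ ^ 2
  have hQ : ∀ u ≠ 0, 0 < Q u := by
    intro u hu
    have h1 := (b.posdef x hx).dotProduct_mulVec_pos (x := fun i => u i) (by
      intro h; apply hu; ext i; exact congrFun h i)
    simp only [star_trivial] at h1
    rw [b.bmat_quad hx0 u u] at h1
    simpa [Q, sq] using h1
  have hc : Continuous Q := by fun_prop
  obtain ⟨z, hz, hmin⟩ := (isCompact_sphere (0 : Euc n) 1).exists_isMinOn ⟨x, hx⟩ hc.continuousOn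
  refine ⟨Q z, hQ z (sphere_ne hz), fun u => ?_⟩
  by_cases hu : u = 0
  · simp [hu]
  have h0 : 0 < ‖u‖ := norm_pos_iff.2 hu
  have h1 : Q z ≤ Q (‖u‖⁻¹ • u) := hmin (by simp [norm_smul, h0.ne'])
  have h2 : Q (‖u‖⁻¹ • u) = (‖u‖ ^ 2)⁻¹ * Q u := by
    simp only [Q, map_smul, inner_smul_left, inner_smul_right]
    simp
    ring
  rw [h2] at h1
  calc Q z * ‖u‖ ^ 2 ≤ (‖u‖ ^ 2)⁻¹ * Q u * ‖u‖ ^ 2 := by gcongr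
    _ = Q u := by field_simp

theorem support (b : Body n H) {x : Euc n} (hx : x ≠ 0) (z : Euc n) : ⟪gradient H x, z⟫ ≤ H z := by
  have h1 : HasDerivAt (fun s : ℝ => H (x + s • (z - x))) ⟪gradient H x, z - x⟫ 0 := by
    have h0 : HasDerivAt (fun s : ℝ => x + s • (z - x)) (z - x) 0 := by
      simpa using ((hasDerivAt_id (0:ℝ)).smul_const (z - x)).const_add x
    have := (b.hasFDerivAt (x := x + (0:ℝ) • (z - x)) (by simpa using hx)).comp_hasDerivAt (0:ℝ) h0
    simpa [Function.comp_def] using this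
  have h2 := h1.tendsto_slope_zero_right
  have h3 : ⟪gradient H x, z - x⟫ ≤ H z - H x := by
    refine le_of_tendsto h2 ?_
    filter_upwards [Ioo_mem_nhdsGT (zero_lt_one' ℝ)] with s hs
    have h4 := b.conv.2 (Set.mem_univ x) (Set.mem_univ z)
      (by linarith [hs.2] : (0:ℝ) ≤ 1 - s) hs.1.le (by ring)
    have h5 : (1 - s) • x + s • z = x + s • (z - x) := by module
    rw [h5] at h4
    simp only [zero_add, zero_smul, add_zero, smul_eq_mul] at h4 ⊢
    rw [inv_mul_le_iff₀ hs.1]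
    linarith
  rw [inner_sub_right, b.euler hx] at h3
  linarith

end Body

open MeasureTheory Matrix Metric
open scoped RealInnerProductSpace
open scoped ENNReal
open scoped Topology

namespace Body
variable {n : ℕ} {H : Euc n → ℝ}

theorem line_deriv (b : Body n H) {x v : Euc n} {s : ℝ} (h : x + s • v ≠ 0) :
    HasDerivAt (fun s : ℝ => H (x + s • v)) ⟪gradient H (x + s • v), v⟫ s := by
  have h0 : HasDerivAt (fun s : ℝ => x + s • v) v s := by
    simpa using ((hasDerivAt_id s).smul_const v).const_add x
  have h2 := b.hasFDerivAt h
  have := HasFDerivAt.comp_hasDerivAt s h2 h0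
  exact this

set_option maxHeartbeats 1000000 in
theorem taylor (b : Body n H) {x0 : Euc n} (hx0 : x0 ≠ 0) {η : ℝ} (hη : 0 < η) :
    ∀ᶠ p : Euc n × Euc n in 𝓝 (x0, x0),
      ⟪hessL n H x0 (p.2 - p.1), p.2 - p.1⟫ / 2 - η * ‖p.2 - p.1‖ ^ 2 ≤
        H p.2 - ⟪gradient H p.1, p.2⟫ := by
  have h1 := (b.grad_strict hx0).isLittleO.def hη
  have h2 : ∀ᶠ p : Euc n × Euc n in 𝓝 (x0, x0), p.1 ≠ 0 := by
    exact (continuous_fst.tendsto (x0, x0)).eventually (ev_ne hx0)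
  obtain ⟨ε, hε, hb⟩ := Metric.eventually_nhds_iff_ball.1 (h1.and h2)
  filter_upwards [ball_mem_nhds (x0, x0) hε] with p hp
  obtain ⟨x, z⟩ := p
  rw [← ball_prod_same, Set.mem_prod] at hp
  obtain ⟨hx, hz⟩ := hp
  simp only at hx hz ⊢
  set v := z - x with hv
  have hseg : ∀ s ∈ Set.Icc (0:ℝ) 1, x + s • v ∈ ball x0 ε := by
    intro s hs
    have := (convex_ball x0 ε) hx hz (by linarith [hs.2] : (0:ℝ) ≤ 1 - s) hs.1 (by ring)
    convert this using 1
    rw [hv]; module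
  have hne : ∀ y ∈ ball x0 ε, y ≠ 0 := by
    intro y hy
    refine (hb (y, x) ?_).2
    rw [← ball_prod_same]; exact ⟨hy, hx⟩
  set φ : ℝ → ℝ := fun s => H (x + s • v) - s * ⟪gradient H x, v⟫ - s ^ 2 / 2 * ⟪hessL n H x0 v, v⟫
  have hd : ∀ s ∈ Set.Icc (0:ℝ) 1, HasDerivAt φ
      (⟪gradient H (x + s • v), v⟫ - ⟪gradient H x, v⟫ - s * ⟪hessL n H x0 v, v⟫) s := by
    intro s hs
    have h0 : HasDerivAt (fun s : ℝ => x + s • v) v s := by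
      simpa using ((hasDerivAt_id s).smul_const v).const_add x
    have h3 : HasDerivAt (fun s : ℝ => H (x + s • v)) ⟪gradient H (x + s • v), v⟫ s := by
      exact b.line_deriv (hne _ (hseg s hs))
    have h4 : HasDerivAt (fun s : ℝ => s * ⟪gradient H x, v⟫) ⟪gradient H x, v⟫ s := by
      simpa using (hasDerivAt_id s).mul_const ⟪gradient H x, v⟫
    have h5 : HasDerivAt (fun s : ℝ => s ^ 2 / 2 * ⟪hessL n H x0 v, v⟫)
        (s * ⟪hessL n H x0 v, v⟫) s := by
      have := ((hasDerivAt_pow 2 s).div_const 2).mul_const ⟪hessL n H x0 v, v⟫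
      have e : (↑2 * s ^ (2 - 1) / 2 * ⟪hessL n H x0 v, v⟫ : ℝ) = s * ⟪hessL n H x0 v, v⟫ := by
        norm_num
      exact this.congr_deriv (by norm_num)
    exact (h3.sub h4).sub h5
  obtain ⟨c, hc, hc2⟩ := exists_hasDerivAt_eq_slope φ _ (zero_lt_one' ℝ)
    (fun s hs => (hd s hs).continuousAt.continuousWithinAt)
    (fun s hs => hd s (Set.Ioo_subset_Icc_self hs))
  have hcI := Set.Ioo_subset_Icc_self hc
  have h6 := (hb (x + c • v, x) (by rw [← ball_prod_same]; exact ⟨hseg c hcI, hx⟩)).1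
  simp only [add_sub_cancel_left, map_smul, norm_smul, Real.norm_eq_abs, abs_of_pos hc.1] at h6
  have h7 : -(η * ‖v‖ ^ 2) ≤ ⟪gradient H (x + c • v) - gradient H x - c • hessL n H x0 v, v⟫ := by
    have h8 := abs_real_inner_le_norm (gradient H (x + c • v) - gradient H x - c • hessL n H x0 v) v
    have h9 := neg_le_of_abs_le h8
    refine le_trans ?_ h9
    rw [neg_le_neg_iff]
    calc _ ≤ (η * (c * ‖v‖)) * ‖v‖ := by gcongr
      _ ≤ (η * (1 * ‖v‖)) * ‖v‖ := by gcongr; exact hcI.2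
      _ = _ := by ring
  rw [inner_sub_left, inner_sub_left, inner_smul_left] at h7
  simp only [conj_trivial] at h7
  rw [hc2] at h7
  simp only [φ, one_smul, zero_smul, add_zero] at h7
  have h10 : x + v = z := by rw [hv]; abel
  have h11 : ⟪gradient H x, v⟫ = ⟪gradient H x, z⟫ - H x := by
    rw [hv, inner_sub_right, b.euler (hne x hx)]
  rw [h10, h11] at h7
  linarith

theorem strict (b : Body n H) {x z : Euc n} (hx : x ∈ sphere (0 : Euc n) 1)
    (hz : z ∈ sphere (0 : Euc n) 1) (hxz : x ≠ z) : ⟪gradient H x, z⟫ < H z := by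
  have hx0 := sphere_ne hx
  have hz0 := sphere_ne hz
  refine lt_of_le_of_ne (b.support hx0 z) fun heq => ?_
  set v := z - x with hv
  have hnx : ‖x‖ = 1 := by simpa using hx
  have hnz : ‖z‖ = 1 := by simpa using hz
  have hle : ∀ s ∈ Set.Icc (0:ℝ) 1, H (x + s • v) - ⟪gradient H x, x + s • v⟫ ≤ 0 := by
    intro s hs
    have h4 := b.conv.2 (Set.mem_univ x) (Set.mem_univ z)
      (by linarith [hs.2] : (0:ℝ) ≤ 1 - s) hs.1 (by ring)
    have h5 : (1 - s) • x + s • z = x + s • v := by rw [hv]; module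
    rw [h5] at h4
    rw [inner_add_right, inner_smul_right, hv, inner_sub_right, b.euler hx0, heq, ← hv]
    simp only [smul_eq_mul] at h4
    linarith
  have hq : ∀ η > 0, ⟪hessL n H x v, v⟫ / 2 - η * ‖v‖ ^ 2 ≤ 0 := by
    intro η hη
    have h1 := b.taylor hx0 hη
    have ht : Filter.Tendsto (fun s : ℝ => (x, x + s • v)) (𝓝[>] 0) (𝓝 (x, x)) := by
      have : ContinuousAt (fun s : ℝ => (x, x + s • v)) 0 := by fun_prop
      have h2 := this.tendsto
      simp only [zero_smul, add_zero] at h2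
      exact h2.mono_left nhdsWithin_le_nhds
    obtain ⟨s, hs1, hs2⟩ := ((ht.eventually h1).and (Ioo_mem_nhdsGT (zero_lt_one' ℝ))).exists
    have h3 := hle s (Set.Ioo_subset_Icc_self hs2)
    simp only [add_sub_cancel_left, map_smul, inner_smul_left, inner_smul_right, norm_smul,
      Real.norm_eq_abs, conj_trivial, abs_of_pos hs2.1] at hs1
    have h4 := hs1.trans h3
    have h5 : s ^ 2 * (⟪hessL n H x v, v⟫ / 2 - η * ‖v‖ ^ 2) ≤ 0 := by
      refine le_trans (le_of_eq ?_) h4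
      ring
    exact nonpos_of_mul_nonpos_right h5 (by have := hs2.1; positivity)
  have hq0 : ⟪hessL n H x v, v⟫ ≤ 0 := by
    by_contra! hcon
    have := hq (⟪hessL n H x v, v⟫ / (4 * (‖v‖ ^ 2 + 1))) (by positivity)
    have h2 : ⟪hessL n H x v, v⟫ / (4 * (‖v‖ ^ 2 + 1)) * ‖v‖ ^ 2 ≤ ⟪hessL n H x v, v⟫ / 4 := by
      rw [div_mul_eq_mul_div, div_le_div_iff₀ (by positivity) (by norm_num)]
      nlinarith
    linarith
  obtain ⟨c, hc, hcq⟩ := b.quad_coercive hx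
  set u := v - ⟪x, v⟫ • x with hu
  have h1 : hessL n H x u = hessL n H x v := by
    rw [hu, map_sub, map_smul, b.hessL_self hx0]; simp
  have h2 : ⟪hessL n H x u, u⟫ = ⟪hessL n H x v, v⟫ := by
    rw [h1, b.hessL_symm hx0, h1, ← b.hessL_symm hx0]
  have h3 : ⟪x, u⟫ = 0 := by
    rw [hu, inner_sub_right, inner_smul_right, real_inner_self_eq_norm_sq, hnx]; ring
  have h4 := hcq u
  rw [h2, h3] at h4
  have h5 : u = 0 := by
    have : ‖u‖ ^ 2 = 0 := by nlinarith [sq_nonneg ‖u‖]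
    simpa using this
  -- z is a multiple of x
  set k := 1 + ⟪x, v⟫ with hk
  have h6 : z = k • x := by
    have : v = ⟪x, v⟫ • x := sub_eq_zero.1 h5
    have h7 : z = x + v := by rw [hv]; abel
    rw [h7, hk, add_smul, one_smul]
    congr 1
  have h8 : |k| = 1 := by
    have := hnz
    rw [h6, norm_smul, hnx] at this
    simpa using this
  rcases (abs_eq zero_le_one).1 h8 with h9 | h9
  · rw [h9, one_smul] at h6; exact hxz h6.symm
  · have h10 := b.hpos hz0
    rw [← heq, h6, h9, inner_smul_right, b.euler hx0] at h10
    linarith [b.hpos hx0]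

end Body

theorem alg_est {c H0 δ W : ℝ} (hc : 0 < c) (hH : 0 < H0) (hδ : 0 < δ) (_hW : 0 ≤ W) :
    ∃ η > 0, η ≤ 1 ∧ ∀ t u v : ℝ, 0 ≤ u → 0 ≤ v → v ^ 2 ≤ 2 * u ^ 2 + 2 * t ^ 2 * W ^ 2 →
      0 ≤ c / 2 * u ^ 2 - H0 / 2 * η * v ^ 2 - η * v ^ 2 - 2 * η * |t| * v + t ^ 2 * δ / 4 := by
  set κ := H0 / 2 + 2 with hκ
  have hκ0 : 0 < κ := by positivity
  refine ⟨min 1 (min (c / (4 * κ)) ((δ / 4) / (2 * κ * W ^ 2 + 1))), by positivity, min_le_left _ _, ?_⟩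
  set η := min 1 (min (c / (4 * κ)) ((δ / 4) / (2 * κ * W ^ 2 + 1)))
  have hη0 : 0 < η := by positivity
  have h1 : η * (4 * κ) ≤ c := by
    rw [← le_div_iff₀ (by positivity)]
    exact (min_le_right _ _).trans (min_le_left _ _)
  have h2 : η * (2 * κ * W ^ 2 + 1) ≤ δ / 4 := by
    rw [← le_div_iff₀ (by positivity)]
    exact (min_le_right _ _).trans (min_le_right _ _)
  intro t u v hu hv h
  have h3 : 2 * |t| * v ≤ t ^ 2 + v ^ 2 := by nlinarith [sq_nonneg (|t| - v), sq_abs t]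
  have h4 : η * (2 * |t| * v) ≤ η * (t ^ 2 + v ^ 2) := by gcongr
  have h5 : η * κ * v ^ 2 ≤ η * κ * (2 * u ^ 2 + 2 * t ^ 2 * W ^ 2) := by gcongr
  have h6 : η * (4 * κ) * u ^ 2 ≤ c * u ^ 2 := by gcongr
  have h7 : t ^ 2 * (η * (2 * κ * W ^ 2 + 1)) ≤ t ^ 2 * (δ / 4) := by gcongr
  rw [hκ] at h5 h6 h7
  nlinarith

namespace Body
variable {n : ℕ} {H : Euc n → ℝ}

/-- the key pointwise quantity -/
noncomputable def EE (n : ℕ) (H f : Euc n → ℝ) (Γ : Euc n → ℝ) (δ t : ℝ) (x z : Euc n) : ℝ :=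
  H z - ⟪gradient H x, z⟫ + t * (f z * H z - f x * ⟪gradient H x, z⟫)
    + t ^ 2 / 2 * ((Γ x + δ) * ⟪gradient H x, z⟫)

set_option maxHeartbeats 2000000 in
theorem local_diag (b : Body n H) {f : Euc n → ℝ} {ω : Euc n → Euc n}
    (hf : ∀ x ∈ sphere (0 : Euc n) 1, HasStrictFDerivAt f (innerSL ℝ (hessL n H x (ω x))) x)
    (hω : ∀ x ∈ sphere (0 : Euc n) 1, ContinuousAt ω x) {δ : ℝ} (hδ : 0 < δ)
    {x0 : Euc n} (hx0 : x0 ∈ sphere (0 : Euc n) 1) :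
    ∀ᶠ q : ℝ × (Euc n × Euc n) in 𝓝 (0, (x0, x0)),
      q.2.1 ∈ sphere (0 : Euc n) 1 → q.2.2 ∈ sphere (0 : Euc n) 1 →
      0 ≤ EE n H f (fun x => H x * ⟪hessL n H x (ω x), ω x⟫) δ q.1 q.2.1 q.2.2 := by
  have hne := sphere_ne hx0
  have hnx : ‖x0‖ = 1 := by simpa using hx0
  have hH0 := b.hpos hne
  obtain ⟨c, hc, hcq⟩ := b.quad_coercive hx0
  obtain ⟨w, hw⟩ : ∃ w, w = H x0 • (ω x0 - ⟪x0, ω x0⟫ • x0) := ⟨_, rfl⟩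
  have hLw : hessL n H x0 w = H x0 • hessL n H x0 (ω x0) := by
    rw [hw, map_smul, map_sub, map_smul, b.hessL_self hne]; simp
  have hxw : ⟪x0, w⟫ = 0 := by
    rw [hw, inner_smul_right, inner_sub_right, inner_smul_right, real_inner_self_eq_norm_sq, hnx]
    ring
  have hww : ⟪hessL n H x0 w, w⟫ = H x0 ^ 2 * ⟪hessL n H x0 (ω x0), ω x0⟫ := by
    rw [hLw, inner_smul_left, b.hessL_symm hne, hLw, inner_smul_right, ← b.hessL_symm hne]
    simp; ring
  obtain ⟨η, hη, hη1, halg⟩ := alg_est hc hH0 (mul_pos hδ hH0) (norm_nonneg w)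
  have hprojT : Filter.Tendsto (fun q : ℝ × (Euc n × Euc n) => q.2) (𝓝 (0, (x0, x0)))
    (𝓝 (x0, x0)) := continuous_snd.tendsto _
  have hx_T : Filter.Tendsto (fun q : ℝ × (Euc n × Euc n) => q.2.1) (𝓝 (0, (x0, x0)))
    (𝓝 x0) := (continuous_fst.comp continuous_snd).tendsto _
  have hz_T : Filter.Tendsto (fun q : ℝ × (Euc n × Euc n) => q.2.2) (𝓝 (0, (x0, x0)))
    (𝓝 x0) := (continuous_snd.comp continuous_snd).tendsto _
  have e1 := hprojT.eventually (b.taylor hne hη)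
  have hHs : HasStrictFDerivAt H (innerSL ℝ (gradient H x0)) x0 := by
    have := (b.contDiffAt hne).hasStrictFDerivAt (by simp)
    rwa [(b.hasFDerivAt hne).fderiv] at this
  have hG := (hf x0 hx0).mul hHs
  have e2 := hprojT.eventually (hG.isLittleO.def hη)
  have cX : ContinuousAt (gradient H) x0 := (b.grad_contDiffAt hne).continuousAt
  have cH : ContinuousAt H x0 := (b.contDiffAt hne).continuousAt
  have cL : ContinuousAt (hessL n H) x0 := (b.hessL_contDiffAt hne).continuousAt
  have cf : ContinuousAt f x0 := (hf x0 hx0).hasFDerivAt.continuousAt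
  have cw : ContinuousAt ω x0 := hω x0 hx0
  have cfX : ContinuousAt (fun x => f x • gradient H x) x0 := cf.smul cX
  have e3 : ∀ᶠ q : ℝ × (Euc n × Euc n) in 𝓝 (0, (x0, x0)),
      ‖f q.2.1 • gradient H q.2.1 - f x0 • gradient H x0‖ < η := by
    have := (cfX.tendsto.comp hx_T).eventually (ball_mem_nhds _ hη)
    filter_upwards [this] with q hq
    simpa [dist_eq_norm] using hq
  have e4 : ∀ᶠ q : ℝ × (Euc n × Euc n) in 𝓝 (0, (x0, x0)),
      ‖x0 - (1/2 : ℝ) • (q.2.1 + q.2.2)‖ < η := by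
    have h1 : Filter.Tendsto (fun q : ℝ × (Euc n × Euc n) => ‖x0 - (1/2 : ℝ) • (q.2.1 + q.2.2)‖)
        (𝓝 (0, (x0, x0))) (𝓝 ‖x0 - (1/2 : ℝ) • (x0 + x0)‖) :=
      ((tendsto_const_nhds).sub ((hx_T.add hz_T).const_smul _)).norm
    have h2 : ‖x0 - (1/2 : ℝ) • (x0 + x0)‖ = 0 := by
      rw [norm_eq_zero]; module
    rw [h2] at h1
    exact h1.eventually (gt_mem_nhds hη)
  set Γ : Euc n → ℝ := fun x => H x * ⟪hessL n H x (ω x), ω x⟫ with hΓ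
  have cΓ : ContinuousAt Γ x0 := cH.mul ((cL.clm_apply cw).inner cw)
  have e5 : ∀ᶠ q : ℝ × (Euc n × Euc n) in 𝓝 (0, (x0, x0)),
      Γ x0 * H x0 + δ * H x0 / 2 < (Γ q.2.1 + δ) * ⟪gradient H q.2.1, q.2.2⟫ := by
    have h1 : Filter.Tendsto (fun q : ℝ × (Euc n × Euc n) =>
        (Γ q.2.1 + δ) * ⟪gradient H q.2.1, q.2.2⟫) (𝓝 (0, (x0, x0)))
        (𝓝 ((Γ x0 + δ) * ⟪gradient H x0, x0⟫)) :=
      ((cΓ.tendsto.comp hx_T).add_const δ).mul ((cX.tendsto.comp hx_T).inner hz_T)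
    rw [b.euler hne] at h1
    refine h1.eventually (lt_mem_nhds ?_)
    nlinarith [mul_pos hδ hH0]
  have e6 := hx_T.eventually (ev_ne hne)
  filter_upwards [e1, e2, e3, e4, e5, e6] with q h1 h2 h3 h4 h5 h6 hxS hzS
  obtain ⟨t, x, z⟩ := q
  simp only at h1 h2 h3 h4 h5 h6 hxS hzS ⊢
  have hnx' : ‖x‖ = 1 := by simpa using hxS
  have hnz' : ‖z‖ = 1 := by simpa using hzS
  set v := z - x with hv
  have hvswap : ‖x - z‖ = ‖v‖ := by rw [hv, norm_sub_rev]
  -- bound on ⟪x0, v⟫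
  have h7 : |⟪x0, v⟫| ≤ η * ‖v‖ := by
    have h8 : ⟪x0, v⟫ = ⟪x0 - (1/2 : ℝ) • (x + z), v⟫ := by
      have : ⟪x + z, v⟫ = 0 := by
        rw [hv, inner_add_left, inner_sub_right, inner_sub_right, real_inner_self_eq_norm_sq,
          real_inner_self_eq_norm_sq, hnx', hnz', real_inner_comm x z]; ring
      rw [inner_sub_left, inner_smul_left, this]; simp
    rw [h8]
    exact (abs_real_inner_le_norm _ _).trans (by gcongr)
  have h7' : ⟪x0, v⟫ ^ 2 ≤ η * ‖v‖ ^ 2 := by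
    have := pow_le_pow_left₀ (abs_nonneg _) h7 2
    rw [sq_abs] at this
    have h9 : η ^ 2 * ‖v‖ ^ 2 ≤ η * ‖v‖ ^ 2 := by
      gcongr; nlinarith
    nlinarith
  set u := v + t • w with hu
  have h10 : ‖v‖ ^ 2 ≤ 2 * ‖u‖ ^ 2 + 2 * t ^ 2 * ‖w‖ ^ 2 := by
    have h11 : v = u - t • w := by rw [hu]; abel
    have h12 : ‖v‖ ≤ ‖u‖ + |t| * ‖w‖ := by
      rw [h11]
      refine (norm_sub_le _ _).trans ?_
      rw [norm_smul, Real.norm_eq_abs]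
    have h13 := pow_le_pow_left₀ (norm_nonneg _) h12 2
    nlinarith [sq_nonneg (‖u‖ - |t| * ‖w‖), sq_abs t]
  have h14 := halg t ‖u‖ ‖v‖ (norm_nonneg _) (norm_nonneg _) h10
  have h15 := hcq u
  have h16 : ⟪x0, u⟫ = ⟪x0, v⟫ := by
    rw [hu, inner_add_right, inner_smul_right, hxw]; ring
  have h17 : ⟪hessL n H x0 u, u⟫ = ⟪hessL n H x0 v, v⟫
      + 2 * t * (H x0 * ⟪hessL n H x0 (ω x0), v⟫) + t ^ 2 * (Γ x0 * H x0) := by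
    have h18 : ⟪hessL n H x0 v, w⟫ = H x0 * ⟪hessL n H x0 (ω x0), v⟫ := by
      rw [b.hessL_symm hne, hLw, inner_smul_right, real_inner_comm]
    have h19 : ⟪hessL n H x0 w, v⟫ = H x0 * ⟪hessL n H x0 (ω x0), v⟫ := by
      rw [hLw, inner_smul_left]; simp
    rw [hu, map_add, map_smul, inner_add_left, inner_add_right, inner_add_right, inner_smul_left,
      inner_smul_left, inner_smul_right, inner_smul_right, h18, h19, hww, hΓ]
    simp only [conj_trivial]
    ring
  rw [h16, h17] at h15
  -- first order term
  have h20 : f z * H z - f x * ⟪gradient H x, z⟫ =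
      -(f x * H x - f z * H z - ⟪f x0 • gradient H x0 + H x0 • hessL n H x0 (ω x0), x - z⟫)
      - ⟪f x • gradient H x - f x0 • gradient H x0, v⟫ + H x0 * ⟪hessL n H x0 (ω x0), v⟫ := by
    rw [← b.euler h6]
    simp only [hv, inner_sub_left, inner_sub_right, inner_add_left, inner_smul_left, conj_trivial]
    ring
  have h21 : |f x * H x - f z * H z - ⟪f x0 • gradient H x0 + H x0 • hessL n H x0 (ω x0), x - z⟫|
      ≤ η * ‖v‖ := by
    rw [← hvswap]
    refine le_trans (le_of_eq ?_) h2
    rw [Real.norm_eq_abs]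
    congr 2
    simp [-inner_gradient_left, inner_add_left, inner_smul_left]
  have h22 : |⟪f x • gradient H x - f x0 • gradient H x0, v⟫| ≤ η * ‖v‖ :=
    (abs_real_inner_le_norm _ _).trans (by gcongr)
  have h23 : t * (H x0 * ⟪hessL n H x0 (ω x0), v⟫) - 2 * η * |t| * ‖v‖ ≤
      t * (f z * H z - f x * ⟪gradient H x, z⟫) := by
    rw [h20]
    set A := f x * H x - f z * H z - ⟪f x0 • gradient H x0 + H x0 • hessL n H x0 (ω x0), x - z⟫
    set B := ⟪f x • gradient H x - f x0 • gradient H x0, v⟫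
    have h24 : t * A ≤ |t| * (η * ‖v‖) := by
      refine (le_abs_self _).trans ?_
      rw [abs_mul]; gcongr
    have h25 : t * B ≤ |t| * (η * ‖v‖) := by
      refine (le_abs_self _).trans ?_
      rw [abs_mul]; gcongr
    nlinarith
  have h26 : t ^ 2 / 2 * (Γ x0 * H x0 + δ * H x0 / 2) ≤
      t ^ 2 / 2 * ((Γ x + δ) * ⟪gradient H x, z⟫) := by gcongr
  unfold EE
  have h27 : H x0 / 2 * ⟪x0, v⟫ ^ 2 ≤ H x0 / 2 * (η * ‖v‖ ^ 2) := by gcongr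
  linarith

theorem global_est (b : Body n H) {f : Euc n → ℝ} {ω : Euc n → Euc n}
    (hf : ∀ x ∈ sphere (0 : Euc n) 1, HasStrictFDerivAt f (innerSL ℝ (hessL n H x (ω x))) x)
    (hω : ∀ x ∈ sphere (0 : Euc n) 1, ContinuousAt ω x) {δ : ℝ} (hδ : 0 < δ) :
    ∀ᶠ t : ℝ in 𝓝 0, ∀ x ∈ sphere (0 : Euc n) 1, ∀ z ∈ sphere (0 : Euc n) 1,
      0 ≤ EE n H f (fun x => H x * ⟪hessL n H x (ω x), ω x⟫) δ t x z := by
  have key : ∀ᶠ t : ℝ in 𝓝 0, ∀ p ∈ (sphere (0 : Euc n) 1) ×ˢ (sphere (0 : Euc n) 1),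
      p.1 ∈ sphere (0 : Euc n) 1 → p.2 ∈ sphere (0 : Euc n) 1 →
      0 ≤ EE n H f (fun x => H x * ⟪hessL n H x (ω x), ω x⟫) δ t p.1 p.2 := by
    refine ((isCompact_sphere (0 : Euc n) 1).prod
      (isCompact_sphere (0 : Euc n) 1)).eventually_forall_of_forall_eventually ?_
    rintro ⟨x0, z0⟩ ⟨hx, hz⟩
    simp only at hx hz
    by_cases hxz : x0 = z0
    · subst hxz
      exact b.local_diag hf hω hδ hx
    · have hx0 := sphere_ne hx
      have hz0 := sphere_ne hz
      have cx : ContinuousAt (fun q : ℝ × (Euc n × Euc n) => q.2.1) (0, (x0, z0)) := by fun_prop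
      have cz : ContinuousAt (fun q : ℝ × (Euc n × Euc n) => q.2.2) (0, (x0, z0)) := by fun_prop
      have ct : ContinuousAt (fun q : ℝ × (Euc n × Euc n) => q.1) (0, (x0, z0)) := by fun_prop
      have cX : ContinuousAt (fun q : ℝ × (Euc n × Euc n) => gradient H q.2.1) (0, (x0, z0)) :=
        ContinuousAt.comp' (f := fun q : ℝ × (Euc n × Euc n) => q.2.1)
          (b.grad_contDiffAt hx0).continuousAt cx
      have cH1 : ContinuousAt (fun q : ℝ × (Euc n × Euc n) => H q.2.1) (0, (x0, z0)) :=
        ContinuousAt.comp' (f := fun q : ℝ × (Euc n × Euc n) => q.2.1)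
          (b.contDiffAt hx0).continuousAt cx
      have cH2 : ContinuousAt (fun q : ℝ × (Euc n × Euc n) => H q.2.2) (0, (x0, z0)) :=
        ContinuousAt.comp' (f := fun q : ℝ × (Euc n × Euc n) => q.2.2)
          (b.contDiffAt hz0).continuousAt cz
      have cf1 : ContinuousAt (fun q : ℝ × (Euc n × Euc n) => f q.2.1) (0, (x0, z0)) :=
        ContinuousAt.comp' (f := fun q : ℝ × (Euc n × Euc n) => q.2.1)
          (hf x0 hx).hasFDerivAt.continuousAt cx
      have cf2 : ContinuousAt (fun q : ℝ × (Euc n × Euc n) => f q.2.2) (0, (x0, z0)) :=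
        ContinuousAt.comp' (f := fun q : ℝ × (Euc n × Euc n) => q.2.2)
          (hf z0 hz).hasFDerivAt.continuousAt cz
      have cL : ContinuousAt (fun q : ℝ × (Euc n × Euc n) => hessL n H q.2.1) (0, (x0, z0)) :=
        ContinuousAt.comp' (f := fun q : ℝ × (Euc n × Euc n) => q.2.1)
          (b.hessL_contDiffAt hx0).continuousAt cx
      have cw : ContinuousAt (fun q : ℝ × (Euc n × Euc n) => ω q.2.1) (0, (x0, z0)) :=
        ContinuousAt.comp' (f := fun q : ℝ × (Euc n × Euc n) => q.2.1) (hω x0 hx) cx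
      have cI := ContinuousAt.inner (𝕜 := ℝ) cX cz
      have cE : ContinuousAt (fun q : ℝ × (Euc n × Euc n) =>
          EE n H f (fun x => H x * ⟪hessL n H x (ω x), ω x⟫) δ q.1 q.2.1 q.2.2) (0, (x0, z0)) := by
        unfold EE
        exact ((cH2.sub cI).add (ct.mul ((cf2.mul cH2).sub (cf1.mul cI)))).add
          (((ct.pow 2).div_const 2).mul
            (((cH1.mul ((cL.clm_apply cw).inner cw)).add continuousAt_const).mul cI))
      have hpos : 0 < EE n H f (fun x => H x * ⟪hessL n H x (ω x), ω x⟫) δ 0 x0 z0 := by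
        unfold EE
        simp only [zero_mul, add_zero, ne_eq, OfNat.ofNat_ne_zero, not_false_eq_true, zero_pow,
          zero_div]
        linarith [b.strict hx hz hxz]
      filter_upwards [cE.eventually (lt_mem_nhds hpos)] with q hq _ _
      exact hq.le
  filter_upwards [key] with t ht x hx z hz
  exact ht (x, z) ⟨hx, hz⟩ hx hz

end Body

open MeasureTheory Matrix Metric
open scoped RealInnerProductSpace
open scoped ENNReal
open scoped Topology

theorem restrict_zero_compl (n : ℕ) : (volume : Measure (Euc n)).restrict {0}ᶜ = volume :=
  restrict_compl_singleton 0

theorem homeo_symm_eq {n : ℕ} (x : sphere (0 : Euc n) 1) (r : Set.Ioi (0:ℝ)) :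
    ((homeomorphUnitSphereProd (Euc n)).symm (x, r) : Euc n) = r.1 • x.1 := rfl

theorem lint_polar {n : ℕ} (F : Euc n → ℝ≥0∞) (G : sphere (0 : Euc n) 1 → Set.Ioi (0:ℝ) → ℝ≥0∞)
    (hG : Measurable (Function.uncurry G)) (h : ∀ x r, F (r.1 • x.1) = G x r) :
    ∫⁻ z, F z = ∫⁻ x, ∫⁻ r, G x r ∂(Measure.volumeIoiPow n) ∂(sphMeasure n) := by
  have h1 : ∫⁻ z, F z = ∫⁻ z : ({(0 : Euc n)}ᶜ : Set (Euc n)), F z ∂((volume : Measure (Euc n)).comap (Subtype.val)) := by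
    rw [lintegral_subtype_comap (measurableSet_singleton _).compl, restrict_zero_compl]
  have hd : Module.finrank ℝ (Euc n) - 1 = n := by simp
  have h2 := (volume : Measure (Euc n)).measurePreserving_homeomorphUnitSphereProd
  rw [hd] at h2
  have h3 := h2.lintegral_comp hG
  rw [h1]
  have h4 : ∀ z : ({(0 : Euc n)}ᶜ : Set (Euc n)),
      F z = Function.uncurry G (homeomorphUnitSphereProd (Euc n) z) := by
    intro z
    have h5 : z = (homeomorphUnitSphereProd (Euc n)).symm (homeomorphUnitSphereProd (Euc n) z) := by simp
    conv_lhs => rw [h5]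
    obtain ⟨x, r⟩ := homeomorphUnitSphereProd (Euc n) z
    rw [homeo_symm_eq, h]
    rfl
  simp_rw [h4]
  rw [h3]
  have : SFinite (Measure.volumeIoiPow n) := inferInstance
  have : SFinite (sphMeasure n) := by unfold sphMeasure; infer_instance
  exact lintegral_prod _ hG.aemeasurable

namespace Body
variable {n : ℕ} {H : Euc n → ℝ}

noncomputable def Phi (n : ℕ) (H : Euc n → ℝ) (z : Euc n) : Euc n := ‖z‖ • gradient H z

noncomputable def dPhi (n : ℕ) (H : Euc n → ℝ) (x : Euc n) : Euc n →L[ℝ] Euc n :=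
  hessL n H x + (innerSL ℝ x).smulRight (gradient H x)

theorem unit_sphere {z : Euc n} (hz : z ≠ 0) : ‖z‖⁻¹ • z ∈ sphere (0 : Euc n) 1 := by
  simp [norm_smul, hz]

theorem norm_hasFDerivAt {z : Euc n} (hz : z ≠ 0) :
    HasFDerivAt (fun z : Euc n => ‖z‖) (‖z‖⁻¹ • innerSL ℝ z) z := by
  have h0 : 0 < ‖z‖ := norm_pos_iff.2 hz
  have h1 := (hasStrictFDerivAt_norm_sq z).hasFDerivAt.sqrt (by positivity)
  simp only [Real.sqrt_sq (norm_nonneg _)] at h1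
  refine h1.congr_fderiv ?_
  ext v
  simp
  field_simp

theorem Phi_deriv (b : Body n H) {z : Euc n} (hz : z ≠ 0) :
    HasFDerivAt (Phi n H) (dPhi n H (‖z‖⁻¹ • z)) z := by
  have h0 : 0 < ‖z‖ := norm_pos_iff.2 hz
  have h1 := (norm_hasFDerivAt hz).smul (b.grad_hasFDerivAt hz)
  refine h1.congr_fderiv ?_
  unfold dPhi
  rw [b.hessL_homog (inv_pos.2 h0) hz, b.grad_homog (inv_pos.2 h0) hz, inv_inv]
  ext v
  simp

theorem det_dPhi (b : Body n H) {x : Euc n} (hx : x ∈ sphere (0 : Euc n) 1) :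
    (dPhi n H x).det = volDens n H x := by
  have hx0 := sphere_ne hx
  have hH := b.hpos hx0
  have hnx : ‖x‖ = 1 := by simpa using hx
  have h1 : volDens n H x = (bmat n H x).det := by
    unfold volDens sigman; field_simp
  rw [h1]
  have h2 : (dPhi n H x).det = (LinearMap.toMatrix (EuclideanSpace.basisFun (Fin (n+1)) ℝ).toBasis
      (EuclideanSpace.basisFun (Fin (n+1)) ℝ).toBasis (dPhi n H x).toLinearMap).det := by
    rw [LinearMap.det_toMatrix]
  rw [h2]
  have hsym : ∀ i j, ehess n H x i j = ehess n H x j i := by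
    intro i j
    rw [b.ehess_apply hx0, b.ehess_apply hx0]
    have := b.hessL_symm hx0 (EuclideanSpace.single i 1) (EuclideanSpace.single j 1)
    simpa [EuclideanSpace.inner_single_right, EuclideanSpace.inner_single_left] using this
  have hxB : ∀ j, ∑ i, x i * bmat n H x i j = H x * x j := by
    intro j
    have h3 := b.bmat_quad hx0 x (EuclideanSpace.single j 1)
    rw [b.hessL_self hx0, real_inner_self_eq_norm_sq, hnx] at h3
    simp only [dotProduct, mulVec, inner_zero_left, EuclideanSpace.inner_single_right] at h3
    simpa using h3
  have h3 : LinearMap.toMatrix (EuclideanSpace.basisFun (Fin (n+1)) ℝ).toBasis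
      (EuclideanSpace.basisFun (Fin (n+1)) ℝ).toBasis (dPhi n H x).toLinearMap =
      (1 + replicateCol Unit (fun i => gradient H x i - H x * x i) *
        replicateRow Unit (fun i => x i / H x)) * bmat n H x := by
    ext i j
    rw [Matrix.add_mul, Matrix.one_mul, Matrix.mul_assoc, Matrix.add_apply]
    have h4 : (replicateCol Unit (fun i => gradient H x i - H x * x i) *
        (replicateRow Unit (fun i => x i / H x) * bmat n H x)) i j =
        (gradient H x i - H x * x i) * x j := by
      simp only [Matrix.mul_apply, replicateCol_apply, replicateRow_apply, Finset.univ_unique,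
        Finset.sum_singleton]
      congr 1
      have h5 := hxB j
      have h6 : ∀ i, x i / H x * bmat n H x i j = (H x)⁻¹ * (x i * bmat n H x i j) := by
        intro i; field_simp
      simp_rw [h6]
      rw [← Finset.mul_sum, h5]; field_simp
    rw [h4]
    simp only [LinearMap.toMatrix_apply, bmat, Matrix.add_apply, Matrix.of_apply, dPhi]
    rw [hsym i j, b.ehess_apply hx0]
    simp [EuclideanSpace.inner_single_right]
    ring
  rw [h3, det_mul, det_one_add_replicateCol_mul_replicateRow]
  have h5 : (fun i => x i / H x) ⬝ᵥ (fun i => gradient H x i - H x * x i) = 0 := by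
    have h6 : ⟪x, gradient H x - H x • x⟫ = 0 := by
      rw [inner_sub_right, inner_smul_right, real_inner_self_eq_norm_sq, hnx, real_inner_comm,
        b.euler hx0]; ring
    have h7 : (fun i => x i / H x) ⬝ᵥ (fun i => gradient H x i - H x * x i) =
       (H x)⁻¹ * ⟪x, gradient H x - H x • x⟫ := by
      simp only [dotProduct, PiLp.inner_apply, Finset.mul_sum]
      refine Finset.sum_congr rfl fun i _ => ?_
      simp
      field_simp
    rw [h7, h6, mul_zero]
  rw [h5]; ring

theorem vd_pos (b : Body n H) {x : Euc n} (hx : x ∈ sphere (0 : Euc n) 1) : 0 < volDens n H x := by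
  have hH := b.hpos (sphere_ne hx)
  have h1 : volDens n H x = (bmat n H x).det := by
    unfold volDens sigman; field_simp
  rw [h1]; exact (b.posdef x hx).det_pos

theorem vd_cont (b : Body n H) : Continuous (fun x : sphere (0 : Euc n) 1 => volDens n H x) := by
  have h1 : (fun x : sphere (0 : Euc n) 1 => volDens n H x) = fun x : sphere (0 : Euc n) 1 =>
      (dPhi n H x).det := by
    ext x; rw [b.det_dPhi x.2]
  rw [h1]
  refine ContinuousLinearMap.continuous_det.comp ?_
  rw [continuous_iff_continuousAt]
  intro x
  have hx0 := sphere_ne x.2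
  have cs : ContinuousAt (fun x : sphere (0 : Euc n) 1 => (x : Euc n)) x := by fun_prop
  have c1 : ContinuousAt (fun x : sphere (0 : Euc n) 1 => hessL n H x) x :=
    ContinuousAt.comp' (f := fun x : sphere (0 : Euc n) 1 => (x : Euc n))
      (b.hessL_contDiffAt hx0).continuousAt cs
  have c2 : ContinuousAt (fun x : sphere (0 : Euc n) 1 => gradient H x) x :=
    ContinuousAt.comp' (f := fun x : sphere (0 : Euc n) 1 => (x : Euc n))
      (b.grad_contDiffAt hx0).continuousAt cs
  unfold dPhi
  refine c1.add ?_
  have c3 : ContinuousAt (fun x : sphere (0 : Euc n) 1 => innerSL ℝ (x : Euc n)) x :=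
    (innerSL ℝ).continuous.continuousAt.comp' (f := fun x : sphere (0 : Euc n) 1 => (x : Euc n)) cs
  exact ((ContinuousLinearMap.smulRightL ℝ (Euc n) (Euc n)).continuous.continuousAt.comp' c3).clm_apply c2

theorem Phi_inj (b : Body n H) : Set.InjOn (Phi n H) {0}ᶜ := by
  have key : ∀ z w : Euc n, z ≠ 0 → w ≠ 0 → Phi n H z = Phi n H w → ‖z‖ ≤ ‖w‖ := by
    intro z w hz hw h
    have h1 : ‖z‖ * H z = ‖w‖ * ⟪gradient H w, z⟫ := by
      have := congrArg (fun y => ⟪y, z⟫) h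
      simp only [Phi, inner_smul_left, b.euler hz, conj_trivial] at this
      exact this
    have h2 := b.support hw z
    have h3 : ‖z‖ * H z ≤ ‖w‖ * H z := by
      rw [h1]; gcongr
    exact le_of_mul_le_mul_right h3 (b.hpos hz)
  intro z hz w hw h
  have hz : z ≠ 0 := hz
  have hw : w ≠ 0 := hw
  have h1 : ‖z‖ = ‖w‖ := le_antisymm (key z w hz hw h) (key w z hw hz h.symm)
  have h0 : 0 < ‖w‖ := norm_pos_iff.2 hw
  have h2 : gradient H z = gradient H w := by
    simp only [Phi, h1] at h
    exact smul_right_injective _ h0.ne' h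
  have h3 : ‖z‖⁻¹ • z = ‖w‖⁻¹ • w := by
    by_contra hne
    have h4 := b.strict (unit_sphere hz) (unit_sphere hw) hne
    rw [b.grad_homog (by rw [h1]; positivity) hz, h2, ← b.grad_homog (inv_pos.2 h0) hw,
      b.euler (sphere_ne (unit_sphere hw))] at h4
    exact lt_irrefl _ h4
  rw [h1] at h3
  exact smul_right_injective _ (inv_pos.2 h0).ne' h3

theorem Phi_surj (b : Body n H) {y : Euc n} (hy : y ≠ 0) :
    ∃ x ∈ sphere (0 : Euc n) 1, ∃ M > 0, y = M • gradient H x ∧ ⟪y, x⟫ = M * H x := by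
  have hc : ContinuousOn (fun z => ⟪y, z⟫ / H z) (sphere (0 : Euc n) 1) := by
    refine ContinuousOn.div (by fun_prop) ?_ (fun x hx => (b.pos x hx).ne')
    intro x hx
    exact (b.contDiffAt (sphere_ne hx)).continuousAt.continuousWithinAt
  obtain ⟨x, hx, hmax⟩ := (isCompact_sphere (0 : Euc n) 1).exists_isMaxOn
    ⟨_, unit_sphere hy⟩ hc
  have hx0 := sphere_ne hx
  have hH := b.hpos hx0
  set M := ⟪y, x⟫ / H x with hM
  have hall : ∀ z : Euc n, z ≠ 0 → ⟪y, z⟫ - M * H z ≤ 0 := by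
    intro z hz
    have h0 : 0 < ‖z‖ := norm_pos_iff.2 hz
    have h1 : ⟪y, ‖z‖⁻¹ • z⟫ / H (‖z‖⁻¹ • z) ≤ M := hmax (unit_sphere hz)
    rw [b.homog _ (inv_pos.2 h0), inner_smul_right, mul_div_mul_left _ _ (inv_pos.2 h0).ne',
      div_le_iff₀ (b.hpos hz)] at h1
    linarith
  have hxM : ⟪y, x⟫ = M * H x := by rw [hM]; field_simp
  have hloc : IsLocalMax (fun z => ⟪y, z⟫ - M * H z) x := by
    filter_upwards [ev_ne hx0] with z hz
    rw [hxM]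
    linarith [hall z hz]
  have hd : HasFDerivAt (fun z => ⟪y, z⟫ - M * H z) (innerSL ℝ y - M • innerSL ℝ (gradient H x)) x :=
    ((innerSL ℝ y).hasFDerivAt).sub ((b.hasFDerivAt hx0).const_mul M)
  have h2 := hloc.hasFDerivAt_eq_zero hd
  have h3 : y = M • gradient H x := by
    refine ext_inner_right ℝ fun v => ?_
    have := congrArg (fun T => T v) h2
    simp [-inner_gradient_left] at this
    rw [inner_smul_left]
    simp only [conj_trivial]; linarith
  refine ⟨x, hx, M, ?_, h3, hxM⟩
  have h4 := hall y hy
  rw [real_inner_self_eq_norm_sq] at h4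
  have h5 : 0 < ‖y‖ := norm_pos_iff.2 hy
  have h6 : 0 < M * H y := by nlinarith [sq_nonneg ‖y‖, pow_pos h5 2]
  exact pos_of_mul_pos_left h6 (b.hpos hy).le

def UU (n : ℕ) (l : Euc n → ℝ) : Set (Euc n) := {z | z ≠ 0 ∧ ‖z‖ < l (‖z‖⁻¹ • z)}

theorem UU_open {l : Euc n → ℝ} (hl : ContinuousOn l (sphere (0 : Euc n) 1)) : IsOpen (UU n l) := by
  have h1 : ContinuousOn (fun z : Euc n => l (‖z‖⁻¹ • z) - ‖z‖) {0}ᶜ := by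
    refine ContinuousOn.sub ?_ (by fun_prop)
    refine hl.comp (t := sphere (0 : Euc n) 1) ?_ (fun z hz => unit_sphere hz)
    have h3 : ContinuousOn (fun z : Euc n => ‖z‖⁻¹) {0}ᶜ :=
      ContinuousOn.inv₀ continuous_norm.continuousOn (fun z hz => (norm_pos_iff.2 hz).ne')
    exact h3.smul continuousOn_id
  have h2 := h1.isOpen_inter_preimage isOpen_compl_singleton (isOpen_Ioi (a := (0:ℝ)))
  convert h2 using 1
  ext z
  simp [UU]

theorem vol_image (b : Body n H) {l : Euc n → ℝ} (hl : ContinuousOn l (sphere (0 : Euc n) 1))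
    (hl0 : ∀ x ∈ sphere (0 : Euc n) 1, 0 < l x) :
    volume (Phi n H '' UU n l) = ENNReal.ofReal
      (∫ x : sphere (0 : Euc n) 1, volDens n H x * (l x ^ (n + 1) / ((n:ℝ) + 1)) ∂(sphMeasure n)) := by
  have hsub : UU n l ⊆ {0}ᶜ := fun z hz => hz.1
  have hm : MeasurableSet (UU n l) := (UU_open hl).measurableSet
  rw [← lintegral_abs_det_fderiv_eq_addHaar_image volume hm
    (fun z hz => (b.Phi_deriv (hsub hz)).hasFDerivWithinAt) (b.Phi_inj.mono hsub)]
  rw [← lintegral_indicator hm]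
  have hls : Continuous (fun x : sphere (0 : Euc n) 1 => l x) :=
    continuousOn_iff_continuous_domRestrict.1 hl
  have hvd := b.vd_cont
  set G : sphere (0 : Euc n) 1 → Set.Ioi (0:ℝ) → ℝ≥0∞ := fun x r =>
    Set.indicator {q : sphere (0 : Euc n) 1 × Set.Ioi (0:ℝ) | q.2.1 < l q.1}
      (fun q => ENNReal.ofReal (volDens n H q.1)) (x, r) with hG
  have hGm : Measurable (Function.uncurry G) := by
    have : Function.uncurry G = Set.indicator {q : sphere (0 : Euc n) 1 × Set.Ioi (0:ℝ) | q.2.1 < l q.1}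
      (fun q => ENNReal.ofReal (volDens n H q.1)) := rfl
    rw [this]
    refine Measurable.indicator ?_ ?_
    · exact (hvd.measurable.comp measurable_fst).ennreal_ofReal
    · exact measurableSet_lt (measurable_subtype_coe.comp measurable_snd)
        (hls.measurable.comp measurable_fst)
  rw [lint_polar _ G hGm]
  · have hfin : IsFiniteMeasure (sphMeasure n) := by unfold sphMeasure; infer_instance
    rw [ofReal_integral_eq_lintegral_ofReal]
    · refine lintegral_congr fun x => ?_
      have h1 : ∀ r : Set.Ioi (0:ℝ), G x r = Set.indicator (Set.Iio ⟨l x, hl0 x x.2⟩)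
          (fun _ => ENNReal.ofReal (volDens n H x)) r := by
        intro r
        rfl
      simp_rw [h1]
      rw [lintegral_indicator measurableSet_Iio, setLIntegral_const,
        Measure.volumeIoiPow_apply_Iio, ENNReal.ofReal_mul (b.vd_pos x.2).le]
    · refine Continuous.integrable_of_hasCompactSupport (hvd.mul ((hls.pow _).div_const _)) ?_
      exact HasCompactSupport.of_compactSpace _
    · refine Filter.Eventually.of_forall fun x => ?_
      have := b.vd_pos x.2
      have := hl0 x x.2
      simp only [Pi.zero_apply]
      positivity
  · intro x r
    have hr : 0 < r.1 := r.2
    have hnx : ‖(x : Euc n)‖ = 1 := by simp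
    have h2 : ‖r.1 • (x : Euc n)‖ = r.1 := by
      rw [norm_smul, hnx, Real.norm_eq_abs, abs_of_pos hr, mul_one]
    have h3 : ‖r.1 • (x : Euc n)‖⁻¹ • (r.1 • (x : Euc n)) = x := by
      rw [h2, smul_smul, inv_mul_cancel₀ hr.ne', one_smul]
    have hmem : r.1 • (x : Euc n) ∈ UU n l ↔ r.1 < l x := by
      unfold UU
      rw [Set.mem_ofPred_eq, h3, h2]
      simp [hr.ne', sphere_ne x.2]
    by_cases hlt : r.1 < l x
    · rw [Set.indicator_of_mem (hmem.2 hlt)]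
      simp only [hG]
      rw [Set.indicator_of_mem (by exact hlt), h3, b.det_dPhi x.2, abs_of_pos (b.vd_pos x.2)]
    · rw [Set.indicator_of_notMem (fun h => hlt (hmem.1 h))]
      simp only [hG]
      rw [Set.indicator_of_notMem (by exact hlt)]

theorem bm_final (b : Body n H) {l1 l2 u1 u2 : Euc n → ℝ}
    (hl1 : ContinuousOn l1 (sphere (0 : Euc n) 1)) (hl2 : ContinuousOn l2 (sphere (0 : Euc n) 1))
    (hp1 : ∀ x ∈ sphere (0 : Euc n) 1, 0 < l1 x) (hp2 : ∀ x ∈ sphere (0 : Euc n) 1, 0 < l2 x)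
    (hu1 : ∀ x ∈ sphere (0 : Euc n) 1, 0 < u1 x) (hu2 : ∀ x ∈ sphere (0 : Euc n) 1, 0 < u2 x)
    (hu : ∀ x ∈ sphere (0 : Euc n) 1, u1 x + u2 x = 2 * H x)
    (hs1 : ∀ x ∈ sphere (0 : Euc n) 1, ∀ z ∈ sphere (0 : Euc n) 1, l1 x * ⟪gradient H x, z⟫ ≤ u1 z)
    (hs2 : ∀ x ∈ sphere (0 : Euc n) 1, ∀ z ∈ sphere (0 : Euc n) 1, l2 x * ⟪gradient H x, z⟫ ≤ u2 z) :
    (∫ x : sphere (0 : Euc n) 1, volDens n H x * l1 x ^ (n + 1) ∂(sphMeasure n)) *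
    (∫ x : sphere (0 : Euc n) 1, volDens n H x * l2 x ^ (n + 1) ∂(sphMeasure n)) ≤
    (∫ x : sphere (0 : Euc n) 1, volDens n H x ∂(sphMeasure n)) ^ 2 := by
  have hmeas : ∀ l : Euc n → ℝ, ContinuousOn l (sphere (0 : Euc n) 1) →
      MeasurableSet (Phi n H '' UU n l) := by
    intro l hl
    refine (UU_open hl).measurableSet.image_of_continuousOn_injOn ?_
      (b.Phi_inj.mono (fun z hz => hz.1))
    intro z hz
    exact (b.Phi_deriv hz.1).continuousAt.continuousWithinAt
  have hin : ∀ l u : Euc n → ℝ, (∀ x ∈ sphere (0 : Euc n) 1, 0 < u x) →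
      (∀ x ∈ sphere (0 : Euc n) 1, ∀ z ∈ sphere (0 : Euc n) 1, l x * ⟪gradient H x, z⟫ ≤ u z) →
      ∀ a ∈ Phi n H '' UU n l, ∀ z ∈ sphere (0 : Euc n) 1, ⟪a, z⟫ < u z := by
    rintro l u h1 h2 _ ⟨w, hw, rfl⟩ z hz
    have h0 : 0 < ‖w‖ := norm_pos_iff.2 hw.1
    have h3 := h2 _ (unit_sphere hw.1) z hz
    rw [b.grad_homog (inv_pos.2 h0) hw.1] at h3
    simp only [Phi, inner_smul_left, conj_trivial]
    rcases le_or_gt ⟪gradient H w, z⟫ 0 with h4 | h4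
    · exact lt_of_le_of_lt (mul_nonpos_of_nonneg_of_nonpos h0.le h4) (h1 z hz)
    · exact lt_of_lt_of_le (mul_lt_mul_of_pos_right hw.2 h4) h3
  have hone : ContinuousOn (fun _ : Euc n => (1:ℝ)) (sphere (0 : Euc n) 1) := continuousOn_const
  have key := bmn n (hmeas l1 hl1) (hmeas l2 hl2)
    ((hmeas _ hone).union (measurableSet_singleton (0 : Euc n))) (by
      intro a ha c hc
      by_cases h0 : (1/2:ℝ) • (a + c) = 0
      · right; exact h0
      · left
        obtain ⟨x, hx, M, hM, h1, h2⟩ := b.Phi_surj h0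
        have h3 := hin l1 u1 hu1 hs1 a ha x hx
        have h4 := hin l2 u2 hu2 hs2 c hc x hx
        have hnx : ‖x‖ = 1 := by simpa using hx
        rw [inner_smul_left, inner_add_left] at h2
        simp only [conj_trivial] at h2
        have h5 := hu x hx
        have hM1 : M < 1 := by
          have : M * H x < 1 * H x := by linarith
          exact lt_of_mul_lt_mul_right this (b.pos x hx).le
        refine ⟨M • x, ⟨smul_ne_zero hM.ne' (sphere_ne hx), ?_⟩, ?_⟩
        · rw [norm_smul, hnx, Real.norm_eq_abs, abs_of_pos hM]; simpa using hM1
        · unfold Phi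
          rw [b.grad_homog hM (sphere_ne hx), norm_smul, hnx, Real.norm_eq_abs, abs_of_pos hM,
            mul_one, h1])
  have hle : volume (Phi n H '' UU n (fun _ => 1) ∪ {0}) ≤ volume (Phi n H '' UU n (fun _ => 1)) := by
    refine (measure_union_le _ _).trans ?_
    simp
  have key2 := key.trans (pow_le_pow_left' hle 2)
  rw [b.vol_image hl1 hp1, b.vol_image hl2 hp2, b.vol_image hone (fun _ _ => one_pos),
    ← ENNReal.ofReal_mul', ← ENNReal.ofReal_pow] at key2
  · rw [ENNReal.ofReal_le_ofReal_iff] at key2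
    · have hc : (0:ℝ) < (n:ℝ) + 1 := by positivity
      simp only [← mul_div_assoc, one_pow, mul_one, integral_div] at key2
      rw [div_mul_eq_mul_div, div_div, div_pow, ← sq, div_le_div_iff_of_pos_right (by positivity)] at key2
      exact key2
    · positivity
  · refine integral_nonneg fun x => ?_
    have := b.vd_pos x.2
    simp only [Pi.zero_apply]
    positivity
  · refine integral_nonneg fun x => ?_
    have := b.vd_pos x.2
    have := hp2 x x.2
    simp only [Pi.zero_apply]
    positivity

end Body

open MeasureTheory Matrix Metric
open scoped RealInnerProductSpace
open scoped ENNReal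
open scoped Topology

/-- second order remainder of `(1+ta+t²g)^N` -/
noncomputable def RR : ℕ → ℝ → ℝ → ℝ → ℝ
  | 0, _, _, _ => 0
  | (N+1), t, a, g => RR N t a g * (1 + t * a + t ^ 2 * g) + g + N * a ^ 2 + N * t * a * g

theorem RR_spec (N : ℕ) (t a g : ℝ) :
    (1 + t * a + t ^ 2 * g) ^ N = 1 + N * t * a + t ^ 2 * RR N t a g := by
  induction N with
  | zero => simp [RR]
  | succ N ih => rw [pow_succ, ih, RR]; push_cast; ring

theorem RR_zero (N : ℕ) (a g : ℝ) : RR N 0 a g = N * g + N * (N - 1) / 2 * a ^ 2 := by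
  induction N with
  | zero => simp [RR]
  | succ N ih => rw [RR, ih]; push_cast; ring

theorem RR_cont (N : ℕ) {Y : Type*} [TopologicalSpace Y] {t a g : Y → ℝ} (ht : Continuous t)
    (ha : Continuous a) (hg : Continuous g) : Continuous fun y => RR N (t y) (a y) (g y) := by
  induction N with
  | zero => simpa [RR] using continuous_const
  | succ N ih => simp only [RR]; fun_prop

abbrev Sph (n : ℕ) : Type := sphere (0 : Euc n) 1

instance sphFin (n : ℕ) : IsFiniteMeasure (sphMeasure n) := by unfold sphMeasure; infer_instance

theorem sph_int {n : ℕ} {E : Type*} [NormedAddCommGroup E] {g : Sph n → E} (hg : Continuous g) :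
    Integrable g (sphMeasure n) :=
  hg.integrable_of_hasCompactSupport (HasCompactSupport.of_compactSpace _)

theorem sph_ne (n : ℕ) : sphMeasure n ≠ 0 := by
  unfold sphMeasure
  exact Measure.toSphere_ne_zero _

theorem sph_int_pos {n : ℕ} {g : Sph n → ℝ} (hg : Continuous g) (h : ∀ x, 0 < g x) :
    0 < ∫ x, g x ∂(sphMeasure n) := by
  rw [integral_pos_iff_support_of_nonneg (fun x => (h x).le) (sph_int hg)]
  have : Function.support g = Set.univ := by
    ext x; simp [(h x).ne']
  rw [this]
  simpa [pos_iff_ne_zero] using sph_ne n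

theorem second_var {n : ℕ} {v f G : Sph n → ℝ} (hv : Continuous v) (hv0 : ∀ x, 0 < v x)
    (hf : Continuous f) (hG : Continuous G) (hmean : ∫ x, v x * f x ∂(sphMeasure n) = 0)
    (hbm : ∀ᶠ t : ℝ in 𝓝 0,
      (∫ x, v x * (1 + t * f x + t ^ 2 * G x) ^ (n + 1) ∂(sphMeasure n)) *
      (∫ x, v x * (1 + (-t) * f x + (-t) ^ 2 * G x) ^ (n + 1) ∂(sphMeasure n)) ≤
      (∫ x, v x ∂(sphMeasure n)) ^ 2) :
    2 * (∫ x, v x * G x ∂(sphMeasure n)) + n * ∫ x, v x * f x ^ 2 ∂(sphMeasure n) ≤ 0 := by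
  set V := ∫ x, v x ∂(sphMeasure n) with hV
  have hVpos : 0 < V := sph_int_pos hv hv0
  set Q : ℝ → ℝ := fun t => ∫ x, v x * RR (n + 1) t (f x) (G x) ∂(sphMeasure n) with hQ
  have hP : ∀ t : ℝ, ∫ x, v x * (1 + t * f x + t ^ 2 * G x) ^ (n + 1) ∂(sphMeasure n) =
      V + t ^ 2 * Q t := by
    intro t
    have h1 : ∀ x, v x * (1 + t * f x + t ^ 2 * G x) ^ (n + 1) =
        v x + (((n + 1 : ℕ) : ℝ) * t) * (v x * f x) + t ^ 2 * (v x * RR (n + 1) t (f x) (G x)) := by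
      intro x; rw [RR_spec]; ring
    have c : Continuous fun x => RR (n + 1) t (f x) (G x) := RR_cont _ continuous_const hf hG
    simp_rw [h1]
    rw [integral_add, integral_add, integral_const_mul, integral_const_mul, hmean]
    · ring
    all_goals exact sph_int (by fun_prop)
  have hQc : Continuous Q := by
    have h := continuous_parametric_integral_of_continuous (μ := sphMeasure n)
      (f := fun (t : ℝ) (x : Sph n) => v x * RR (n + 1) t (f x) (G x))
      ((hv.comp continuous_snd).mul (RR_cont _ continuous_fst (hf.comp continuous_snd)
        (hG.comp continuous_snd))) isCompact_univ
    simpa using h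
  have hlim : V * (Q 0 + Q (-0)) + 0 ^ 2 * (Q 0 * Q (-0)) ≤ 0 := by
    have ct : Continuous fun t : ℝ => V * (Q t + Q (-t)) + t ^ 2 * (Q t * Q (-t)) := by fun_prop
    have h2 : Filter.Tendsto (fun t : ℝ => V * (Q t + Q (-t)) + t ^ 2 * (Q t * Q (-t))) (𝓝[≠] 0)
      (𝓝 (V * (Q 0 + Q (-0)) + 0 ^ 2 * (Q 0 * Q (-0)))) :=
      (ct.tendsto 0).mono_left nhdsWithin_le_nhds
    refine le_of_tendsto h2 ?_
    filter_upwards [nhdsWithin_le_nhds hbm, self_mem_nhdsWithin] with t ht ht0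
    have ht0 : t ≠ 0 := ht0
    rw [hP, hP] at ht
    have h3 : t ^ 2 * (V * (Q t + Q (-t)) + t ^ 2 * (Q t * Q (-t))) ≤ 0 := by nlinarith
    exact nonpos_of_mul_nonpos_right h3 (by positivity)
  have hQ0 : Q 0 ≤ 0 := by
    simp only [neg_zero] at hlim
    have : V * Q 0 ≤ 0 := by nlinarith
    exact nonpos_of_mul_nonpos_right this hVpos
  have h4 : Q 0 = ((n:ℝ) + 1) * (∫ x, v x * G x ∂(sphMeasure n)) +
      (((n:ℝ) + 1) * n / 2) * ∫ x, v x * f x ^ 2 ∂(sphMeasure n) := by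
    simp only [hQ, RR_zero]
    rw [← integral_const_mul, ← integral_const_mul, ← integral_add]
    · refine integral_congr_ae (Filter.Eventually.of_forall fun x => ?_)
      simp only; push_cast; ring
    all_goals exact sph_int (by fun_prop)
  rw [h4] at hQ0
  have h5 : (((n:ℝ) + 1) / 2) * (2 * (∫ x, v x * G x ∂(sphMeasure n)) +
    n * ∫ x, v x * f x ^ 2 ∂(sphMeasure n)) ≤ 0 := by linarith
  exact nonpos_of_mul_nonpos_right h5 (by positivity)

theorem mean_shift {n : ℕ} {v f : Sph n → ℝ} (hv : Continuous v) (hf : Continuous f)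
    (hV : 0 < ∫ x, v x ∂(sphMeasure n)) :
    (∫ x, v x * (f x - (∫ x, v x * f x ∂(sphMeasure n)) / ∫ x, v x ∂(sphMeasure n))
      ∂(sphMeasure n) = 0) ∧
    (∫ x, v x * (f x - (∫ x, v x * f x ∂(sphMeasure n)) / ∫ x, v x ∂(sphMeasure n)) ^ 2
      ∂(sphMeasure n) = (∫ x, v x * f x ^ 2 ∂(sphMeasure n)) -
        (∫ x, v x * f x ∂(sphMeasure n)) ^ 2 / ∫ x, v x ∂(sphMeasure n)) := by
  set V := ∫ x, v x ∂(sphMeasure n) with hVd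
  set I := ∫ x, v x * f x ∂(sphMeasure n) with hI
  constructor
  · have h1 : ∀ x, v x * (f x - I / V) = v x * f x - (I / V) * v x := fun x => by ring
    simp_rw [h1]
    rw [integral_sub, integral_const_mul, ← hVd, ← hI]
    · field_simp; ring
    all_goals exact sph_int (by fun_prop)
  · have h1 : ∀ x, v x * (f x - I / V) ^ 2 = v x * f x ^ 2 - (2 * (I / V)) * (v x * f x)
        + (I / V) ^ 2 * v x := fun x => by ring
    simp_rw [h1]
    rw [integral_add, integral_sub, integral_const_mul, integral_const_mul, ← hVd, ← hI]
    · field_simp; ring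
    all_goals exact sph_int (by fun_prop)

namespace Body
variable {n : ℕ} {H : Euc n → ℝ}

theorem sph_cont {Y : Type*} [TopologicalSpace Y] {g : Euc n → Y}
    (h : ∀ x ∈ sphere (0 : Euc n) 1, ContinuousAt g x) : Continuous fun x : Sph n => g x := by
  rw [continuous_iff_continuousAt]
  intro x
  exact ContinuousAt.comp' (f := fun x : sphere (0 : Euc n) 1 => (x : Euc n)) (h x x.2) (by fun_prop)

theorem poincare0 (b : Body n H) {f : Euc n → ℝ} {ω : Euc n → Euc n}
    (hf : ∀ x ∈ sphere (0 : Euc n) 1, HasStrictFDerivAt f (innerSL ℝ (hessL n H x (ω x))) x)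
    (hω : ∀ x ∈ sphere (0 : Euc n) 1, ContinuousAt ω x)
    (hmean : ∫ x : Sph n, volDens n H x * f x ∂(sphMeasure n) = 0) :
    n * ∫ x : Sph n, volDens n H x * f x ^ 2 ∂(sphMeasure n) ≤
      ∫ x : Sph n, volDens n H x * (H x * ⟪hessL n H x (ω x), ω x⟫) ∂(sphMeasure n) := by
  set Γ : Euc n → ℝ := fun x => H x * ⟪hessL n H x (ω x), ω x⟫ with hΓ
  have cfa : ∀ x ∈ sphere (0 : Euc n) 1, ContinuousAt f x := fun x hx =>
    (hf x hx).hasFDerivAt.continuousAt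
  have cΓa : ∀ x ∈ sphere (0 : Euc n) 1, ContinuousAt Γ x := fun x hx =>
    (b.contDiffAt (sphere_ne hx)).continuousAt.mul
      (((b.hessL_contDiffAt (sphere_ne hx)).continuousAt.clm_apply (hω x hx)).inner (hω x hx))
  have cf : Continuous fun x : Sph n => f x := sph_cont cfa
  have cΓ : Continuous fun x : Sph n => Γ x := sph_cont cΓa
  have cv := b.vd_cont
  have hδall : ∀ δ > 0, n * ∫ x : Sph n, volDens n H x * f x ^ 2 ∂(sphMeasure n) ≤
      (∫ x : Sph n, volDens n H x * Γ x ∂(sphMeasure n)) +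
      δ * ∫ x : Sph n, volDens n H x ∂(sphMeasure n) := by
    intro δ hδ
    have hsv := second_var (n := n) (v := fun x : Sph n => volDens n H x) (f := fun x => f x)
      (G := fun x : Sph n => -(1/2) * (Γ x + δ)) cv (fun x => b.vd_pos x.2) cf (continuous_const.mul (cΓ.add continuous_const)) hmean (by
        have hg := b.global_est hf hω hδ
        have hposf : ∀ᶠ t : ℝ in 𝓝 0, ∀ x ∈ (Set.univ : Set (Sph n)),
            0 < 1 + t * f x ∧ 0 < 1 + t * f x + t ^ 2 * (-(1/2) * (Γ x + δ)) := by
          refine isCompact_univ.eventually_forall_of_forall_eventually fun x0 _ => ?_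
          have c1 : Continuous fun q : ℝ × Sph n => 1 + q.1 * f q.2 :=
            continuous_const.add (continuous_fst.mul (cf.comp continuous_snd))
          have c2 : Continuous fun q : ℝ × Sph n => 1 + q.1 * f q.2 +
              q.1 ^ 2 * (-(1/2) * (Γ q.2 + δ)) :=
            c1.add ((continuous_fst.pow 2).mul
              (continuous_const.mul ((cΓ.comp continuous_snd).add continuous_const)))
          have e1 := (c1.tendsto (0, x0)).eventually (lt_mem_nhds (a := 0) (by simp))
          have e2 := (c2.tendsto (0, x0)).eventually (lt_mem_nhds (a := 0) (by simp))
          exact e1.and e2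
        have hneg : Filter.Tendsto (fun t : ℝ => -t) (𝓝 0) (𝓝 0) := by
          have := (continuous_neg (G := ℝ)).tendsto 0
          rwa [neg_zero] at this
        filter_upwards [hg, hneg.eventually hg, hposf, hneg.eventually hposf] with t g1 g2 p1 p2
        have claim : ∀ s : ℝ, (∀ x ∈ sphere (0 : Euc n) 1, ∀ z ∈ sphere (0 : Euc n) 1,
            0 ≤ EE n H f Γ δ s x z) → ∀ x ∈ sphere (0 : Euc n) 1, ∀ z ∈ sphere (0 : Euc n) 1,
            (1 + s * f x + s ^ 2 * (-(1/2) * (Γ x + δ))) * ⟪gradient H x, z⟫ ≤ (1 + s * f z) * H z := by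
          intro s hs x hx z hz
          have := hs x hx z hz
          unfold EE at this
          linarith
        have cl : ∀ s : ℝ, ContinuousOn (fun x => 1 + s * f x + s ^ 2 * (-(1/2) * (Γ x + δ)))
            (sphere (0 : Euc n) 1) := by
          intro s x hx
          exact ((continuousAt_const.add (continuousAt_const.mul (cfa x hx))).add
            (continuousAt_const.mul (continuousAt_const.mul
              ((cΓa x hx).add continuousAt_const)))).continuousWithinAt
        exact b.bm_final (cl t) (cl (-t))
          (fun x hx => (p1 ⟨x, hx⟩ trivial).2) (fun x hx => (p2 ⟨x, hx⟩ trivial).2)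
          (u1 := fun z => (1 + t * f z) * H z) (u2 := fun z => (1 + (-t) * f z) * H z)
          (fun x hx => mul_pos (p1 ⟨x, hx⟩ trivial).1 (b.pos x hx))
          (fun x hx => mul_pos (p2 ⟨x, hx⟩ trivial).1 (b.pos x hx))
          (fun x hx => by ring) (claim t g1) (claim (-t) g2))
    have h1 : ∫ x : Sph n, volDens n H x * (-(1/2) * (Γ x + δ)) ∂(sphMeasure n) =
        -(1/2) * ((∫ x : Sph n, volDens n H x * Γ x ∂(sphMeasure n)) +
      δ * ∫ x : Sph n, volDens n H x ∂(sphMeasure n)) := by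
      rw [← integral_const_mul, ← integral_add, ← integral_const_mul]
      · refine integral_congr_ae (Filter.Eventually.of_forall fun x => ?_)
        simp only; ring
      · exact sph_int (cv.mul cΓ)
      · exact sph_int (continuous_const.mul cv)
    rw [h1] at hsv
    linarith
  refine le_of_forall_pos_le_add fun ε hε => ?_
  have hV : 0 < ∫ x : Sph n, volDens n H x ∂(sphMeasure n) := sph_int_pos cv (fun x => b.vd_pos x.2)
  have := hδall (ε / ∫ x : Sph n, volDens n H x ∂(sphMeasure n)) (by positivity)
  rwa [div_mul_cancel₀ _ hV.ne'] at this

theorem poincare (b : Body n H) {f : Euc n → ℝ} {ω : Euc n → Euc n}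
    (hf : ∀ x ∈ sphere (0 : Euc n) 1, HasStrictFDerivAt f (innerSL ℝ (hessL n H x (ω x))) x)
    (hω : ∀ x ∈ sphere (0 : Euc n) 1, ContinuousAt ω x) :
    n * ∫ x : Sph n, volDens n H x * f x ^ 2 ∂(sphMeasure n) ≤
      (∫ x : Sph n, volDens n H x * (H x * ⟪hessL n H x (ω x), ω x⟫) ∂(sphMeasure n)) +
      n * (∫ x : Sph n, volDens n H x * f x ∂(sphMeasure n)) ^ 2 /
        ∫ x : Sph n, volDens n H x ∂(sphMeasure n) := by
  have cv := b.vd_cont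
  have cf : Continuous fun x : Sph n => f x := sph_cont fun x hx =>
    (hf x hx).hasFDerivAt.continuousAt
  have hV : 0 < ∫ x : Sph n, volDens n H x ∂(sphMeasure n) := sph_int_pos cv (fun x => b.vd_pos x.2)
  set V := ∫ x : Sph n, volDens n H x ∂(sphMeasure n) with hVd
  set I := ∫ x : Sph n, volDens n H x * f x ∂(sphMeasure n) with hI
  obtain ⟨e1, e2⟩ := mean_shift cv cf hV
  have := b.poincare0 (f := fun x => f x - I / V) (ω := ω) (fun x hx => (hf x hx).sub_const _) hω e1
  rw [e2] at this
  rw [mul_div_assoc]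
  linarith

end Body

open MeasureTheory Matrix Metric
open scoped RealInnerProductSpace
open scoped ENNReal
open scoped Topology

namespace Body
variable {n : ℕ} {H : Euc n → ℝ}

theorem grad_ne (b : Body n H) {x : Euc n} (hx : x ≠ 0) : gradient H x ≠ 0 := by
  intro h
  have h1 := b.euler hx
  rw [h, inner_zero_left] at h1
  linarith [b.hpos hx]

theorem r_pos (b : Body n H) {x : Euc n} (hx : x ≠ 0) : 0 < ‖gradient H x‖ :=
  norm_pos_iff.2 (b.grad_ne hx)

theorem r_strict (b : Body n H) {x : Euc n} (hx : x ≠ 0) :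
    HasStrictFDerivAt (fun y => ‖gradient H y‖)
      (innerSL ℝ (hessL n H x (‖gradient H x‖⁻¹ • gradient H x))) x := by
  have hX := b.grad_ne hx
  have h1 : HasStrictFDerivAt (fun z : Euc n => ‖z‖)
      (‖gradient H x‖⁻¹ • innerSL ℝ (gradient H x)) (gradient H x) := by
    have h2 := (contDiffAt_norm ℝ hX (n := 1)).hasStrictFDerivAt (by simp)
    rwa [(norm_hasFDerivAt hX).fderiv] at h2
  have h3 := h1.comp x (b.grad_strict hx)
  refine h3.congr_fderiv ?_
  ext v
  have := b.hessL_symm hx v (gradient H x)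
  simp [inner_smul_left, -inner_gradient_left, -inner_gradient_right]
  left
  rw [real_inner_comm, this, real_inner_comm]

theorem rpow_strict (b : Body n H) {x : Euc n} (hx : x ≠ 0) (a : ℝ) :
    HasStrictFDerivAt (fun y => ‖gradient H y‖ ^ a)
      (innerSL ℝ (hessL n H x ((a * (‖gradient H x‖ ^ a / ‖gradient H x‖ ^ 2)) • gradient H x))) x := by
  have h0 := b.r_pos hx
  have h1 := (b.r_strict hx).rpow_const (p := a) (Or.inl h0.ne')
  refine h1.congr_fderiv ?_
  rw [Real.rpow_sub_one h0.ne']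
  ext v
  simp [inner_smul_left]
  field_simp

theorem comp_strict (b : Body n H) {x : Euc n} (hx : x ≠ 0) (k : Fin (n+1)) :
    HasStrictFDerivAt (fun y => gradient H y k)
      (innerSL ℝ (hessL n H x (EuclideanSpace.single k 1))) x := by
  have h1 := (EuclideanSpace.proj k : Euc n →L[ℝ] ℝ).hasStrictFDerivAt.comp x
    (b.grad_strict hx)
  refine h1.congr_fderiv ?_
  ext v
  have := b.hessL_symm hx (EuclideanSpace.single k 1) v
  simp [this, EuclideanSpace.inner_single_left]

noncomputable def trL (n : ℕ) (H : Euc n → ℝ) (x : Euc n) : ℝ :=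
  ∑ k, ⟪hessL n H x (EuclideanSpace.single k 1), EuclideanSpace.single k (1:ℝ)⟫

noncomputable def omg (n : ℕ) (H : Euc n → ℝ) (a : ℝ) (k : Fin (n+1)) (x : Euc n) : Euc n :=
  (‖gradient H x‖ ^ a) • EuclideanSpace.single k (1:ℝ) +
    (gradient H x k) • ((a * (‖gradient H x‖ ^ a / ‖gradient H x‖ ^ 2)) • gradient H x)

theorem fk_strict (b : Body n H) {x : Euc n} (hx : x ≠ 0) (a : ℝ) (k : Fin (n+1)) :
    HasStrictFDerivAt (fun y => ‖gradient H y‖ ^ a * gradient H y k)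
      (innerSL ℝ (hessL n H x (omg n H a k x))) x := by
  have h1 := (b.rpow_strict hx a).mul (b.comp_strict hx k)
  refine h1.congr_fderiv ?_
  unfold omg
  ext v
  simp [inner_add_left, inner_smul_left]

theorem omg_cont (b : Body n H) {x : Euc n} (hx : x ≠ 0) (a : ℝ) (k : Fin (n+1)) :
    ContinuousAt (omg n H a k) x := by
  have h0 := b.r_pos hx
  have c1 := (b.rpow_strict hx a).hasFDerivAt.continuousAt
  have c2 := (b.comp_strict hx k).hasFDerivAt.continuousAt
  have c3 := (b.grad_contDiffAt hx).continuousAt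
  unfold omg
  exact (c1.smul continuousAt_const).add
    (c2.smul ((continuousAt_const.mul (c1.div (c3.norm.pow 2) (pow_pos h0 2).ne.symm)).smul c3))

theorem omg_sum (b : Body n H) {x : Euc n} (hx : x ≠ 0) (a : ℝ) :
    ∑ k, ⟪hessL n H x (omg n H a k x), omg n H a k x⟫ =
      (‖gradient H x‖ ^ a) ^ 2 * (trL n H x + (2 * a + a ^ 2) *
        (⟪hessL n H x (gradient H x), gradient H x⟫ / ‖gradient H x‖ ^ 2)) := by
  have h0 := b.r_pos hx
  set ρ := ‖gradient H x‖ ^ a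
  set c := a * (ρ / ‖gradient H x‖ ^ 2) with hc
  set X := gradient H x with hX
  set L := hessL n H x with hL
  have h1 : ∀ k, ⟪L (omg n H a k x), omg n H a k x⟫ =
      ρ ^ 2 * ⟪L (EuclideanSpace.single k 1), EuclideanSpace.single k (1:ℝ)⟫ +
      2 * ρ * c * (X k * (L X) k) + c ^ 2 * ⟪L X, X⟫ * (X k) ^ 2 := by
    intro k
    have h2 : ⟪L X, EuclideanSpace.single k (1:ℝ)⟫ = L X k := by
      simp [EuclideanSpace.inner_single_right]
    have h3 : ⟪L (EuclideanSpace.single k (1:ℝ)), X⟫ = L X k := by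
      rw [hL, b.hessL_symm hx, real_inner_comm, ← hL, h2]
    have h4 : omg n H a k x = ρ • EuclideanSpace.single k (1:ℝ) + (X k * c) • X := by
      unfold omg; rw [smul_smul]
    rw [h4, map_add, map_smul, map_smul]
    simp only [inner_add_left, inner_add_right, inner_smul_left, inner_smul_right, conj_trivial, h2, h3]
    ring
  simp_rw [h1]
  rw [Finset.sum_add_distrib, Finset.sum_add_distrib, ← Finset.mul_sum, ← Finset.mul_sum,
    ← Finset.mul_sum]
  have h5 : ∑ k, X k * (L X) k = ⟪L X, X⟫ := by
    simp [PiLp.inner_apply]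
  have h6 : ∑ k, (X k) ^ 2 = ‖X‖ ^ 2 := by
    rw [EuclideanSpace.norm_sq_eq]; simp
  rw [h5, h6, trL, ← hL, hc]
  field_simp
  ring

theorem trL_cont (b : Body n H) {x : Euc n} (hx : x ≠ 0) : ContinuousAt (trL n H) x := by
  unfold trL
  refine tendsto_finsetSum _ fun k _ => ?_
  exact ((b.hessL_contDiffAt hx).continuousAt.clm_apply continuousAt_const).inner continuousAt_const

theorem poincare_sum (b : Body n H) (a : ℝ) :
    n * ∫ x : Sph n, volDens n H x * ((‖gradient H x‖ ^ a) ^ 2 * ‖gradient H x‖ ^ 2) ∂(sphMeasure n) ≤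
      (∫ x : Sph n, volDens n H x * (H x * ((‖gradient H x‖ ^ a) ^ 2 * (trL n H x + (2 * a + a ^ 2) *
        (⟪hessL n H x (gradient H x), gradient H x⟫ / ‖gradient H x‖ ^ 2)))) ∂(sphMeasure n)) +
      n * ‖∫ x : Sph n, volDens n H x • (‖gradient H x‖ ^ a • gradient H x) ∂(sphMeasure n)‖ ^ 2 /
        ∫ x : Sph n, volDens n H x ∂(sphMeasure n) := by
  have cv := b.vd_cont
  have cr : Continuous fun x : Sph n => ‖gradient H x‖ ^ a :=
    sph_cont (g := fun x => ‖gradient H x‖ ^ a)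
      fun x hx => (b.rpow_strict (sphere_ne hx) a).hasFDerivAt.continuousAt
  have cX : Continuous fun x : Sph n => gradient H x :=
    sph_cont fun x hx => (b.grad_contDiffAt (sphere_ne hx)).continuousAt
  have cXk : ∀ k, Continuous fun x : Sph n => gradient H x k := fun k =>
    sph_cont (g := fun x => gradient H x k)
      fun x hx => (b.comp_strict (sphere_ne hx) k).hasFDerivAt.continuousAt
  have cH : Continuous fun x : Sph n => H x :=
    sph_cont fun x hx => (b.contDiffAt (sphere_ne hx)).continuousAt
  have cL : Continuous fun x : Sph n => hessL n H x :=
    sph_cont fun x hx => (b.hessL_contDiffAt (sphere_ne hx)).continuousAt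
  have co : ∀ k, Continuous fun x : Sph n => omg n H a k x := fun k =>
    sph_cont fun x hx => b.omg_cont (sphere_ne hx) a k
  have hk := fun k => b.poincare (fun x hx => b.fk_strict (sphere_ne hx) a k)
    (fun x hx => b.omg_cont (sphere_ne hx) a k)
  have hs := Finset.sum_le_sum (s := Finset.univ) fun k _ => hk k
  rw [← Finset.mul_sum, Finset.sum_add_distrib, ← integral_finsetSum, ← integral_finsetSum,
    ← Finset.sum_div, ← Finset.mul_sum] at hs
  · refine le_trans (le_of_eq ?_) (hs.trans (le_of_eq ?_))
    · congr 2
      ext x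
      rw [← Finset.mul_sum]
      congr 1
      rw [EuclideanSpace.norm_sq_eq, Finset.mul_sum]
      refine Finset.sum_congr rfl fun k _ => ?_
      simp; ring
    · congr 1
      · congr 1
        ext x
        rw [← b.omg_sum (sphere_ne x.2), Finset.mul_sum, Finset.mul_sum]
      · congr 2
        rw [EuclideanSpace.norm_sq_eq]
        refine Finset.sum_congr rfl fun k _ => ?_
        have hi : Integrable (fun x : Sph n => volDens n H x • (‖gradient H x‖ ^ a • gradient H x))
            (sphMeasure n) := sph_int (cv.smul (cr.smul cX))
        have h1 := (EuclideanSpace.proj k : Euc n →L[ℝ] ℝ).integral_comp_comm hi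
        have h2 : ∀ v : Euc n, (EuclideanSpace.proj k : Euc n →L[ℝ] ℝ) v = v k := fun v => rfl
        simp only [h2, PiLp.smul_apply, smul_eq_mul] at h1
        rw [← h1]; simp
  · intro k _
    exact sph_int (cv.mul (cH.mul ((cL.clm_apply (co k)).inner (co k))))
  · intro k _
    exact sph_int (cv.mul ((cr.mul (cXk k)).pow 2))

end Body

open MeasureTheory Matrix Metric
open scoped RealInnerProductSpace
open scoped ENNReal
open scoped Topology

theorem exists_cut : ∃ φ φ' : ℝ → ℝ, Continuous φ ∧ Continuous φ' ∧ (∀ r, HasDerivAt φ (φ' r) r) ∧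
    (∀ r, 0 ≤ φ r) ∧ φ 2 = 1 ∧ (∀ r, r ∉ Set.Icc (1:ℝ) 3 → φ r = 0 ∧ φ' r = 0) := by
  let f : ContDiffBump (2:ℝ) := ⟨1/2, 1, by norm_num, by norm_num⟩
  have hc : ContDiff ℝ 1 f := f.contDiff
  have ht : tsupport f = Set.Icc 1 3 := by
    rw [f.tsupport_eq, Real.closedBall_eq_Icc]
    norm_num [f]
  refine ⟨f, deriv f, f.continuous, hc.continuous_deriv le_rfl,
    fun r => (hc.differentiable (by simp) r).hasDerivAt, fun r => f.nonneg, ?_, ?_⟩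
  · exact f.one_of_mem_closedBall (by simp [f.rIn_pos.le])
  · intro r hr
    rw [← ht] at hr
    exact ⟨image_eq_zero_of_notMem_tsupport hr,
      by_contra fun h => hr (support_deriv_subset h)⟩

theorem cut_rpow_cont {φ : ℝ → ℝ} (hφ : Continuous φ) (h0 : ∀ r, r ∉ Set.Icc (1:ℝ) 3 → φ r = 0) (s : ℝ) :
    Continuous fun r => φ r * r ^ s := by
  rw [continuous_iff_continuousAt]
  intro r
  by_cases hr : r = 0
  · subst hr
    have : (fun r => φ r * r ^ s) =ᶠ[𝓝 0] fun _ => 0 := by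
      filter_upwards [gt_mem_nhds (zero_lt_one' ℝ)] with r hr
      rw [h0 r (fun h => by linarith [h.1]), zero_mul]
    exact continuousAt_const.congr this.symm
  · exact hφ.continuousAt.mul (Real.continuousAt_rpow_const r s (Or.inl hr))

theorem cut_compact {g : ℝ → ℝ} (h0 : ∀ r, r ∉ Set.Icc (1:ℝ) 3 → g r = 0) : HasCompactSupport g :=
  HasCompactSupport.intro isCompact_Icc fun r hr => h0 r hr

theorem cut_radial {φ : ℝ → ℝ} (h0 : ∀ r, r ∉ Set.Icc (1:ℝ) 3 → φ r = 0) (n : ℕ) (s : ℝ) :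
    ∫ r in Set.Ioi (0:ℝ), r ^ n * (φ r * r ^ s) = ∫ r, φ r * r ^ ((n:ℝ) + s) := by
  rw [setIntegral_eq_integral_of_forall_compl_eq_zero]
  · congr 1
    ext r
    by_cases hr : r ∈ Set.Icc (1:ℝ) 3
    · have : 0 < r := by linarith [hr.1]
      rw [Real.rpow_add this, Real.rpow_natCast]; ring
    · rw [h0 r hr]; simp
  · intro r hr
    rw [h0 r (fun h => hr (by simp; linarith [h.1]))]; simp

theorem cut_ibp {φ φ' : ℝ → ℝ} (c : Continuous φ) (c' : Continuous φ') (hd : ∀ r, HasDerivAt φ (φ' r) r)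
    (h0 : ∀ r, r ∉ Set.Icc (1:ℝ) 3 → φ r = 0 ∧ φ' r = 0) (s : ℝ) :
    ∫ r, φ' r * r ^ s = - s * ∫ r, φ r * r ^ (s - 1) := by
  have i1 : ∀ s : ℝ, Integrable (fun r => φ r * r ^ s) := fun s =>
    (cut_rpow_cont c (fun r hr => (h0 r hr).1) s).integrable_of_hasCompactSupport
      (cut_compact fun r hr => by simp [(h0 r hr).1])
  have i2 : ∀ s : ℝ, Integrable (fun r => φ' r * r ^ s) := fun s =>
    (cut_rpow_cont c' (fun r hr => (h0 r hr).2) s).integrable_of_hasCompactSupport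
      (cut_compact fun r hr => by simp [(h0 r hr).2])
  have h1 := integral_eq_zero_of_hasDerivAt_of_integrable (f := fun r => φ r * r ^ s)
    (f' := fun r => φ' r * r ^ s + s * (φ r * r ^ (s - 1))) ?_ ((i2 s).add ((i1 (s-1)).const_mul s)) (i1 s)
  · rw [integral_add (i2 s) ((i1 (s-1)).const_mul s), integral_const_mul] at h1
    linarith
  · intro r
    by_cases hr : r = 0
    · subst hr
      rw [(h0 0 (by simp)).1, (h0 0 (by simp)).2]
      have : (fun r => φ r * r ^ s) =ᶠ[𝓝 0] fun _ => 0 := by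
        filter_upwards [gt_mem_nhds (zero_lt_one' ℝ)] with r hr
        rw [(h0 r (fun h => by linarith [h.1])).1, zero_mul]
      simpa using (hasDerivAt_const (0:ℝ) (0:ℝ)).congr_of_eventuallyEq this
    · refine ((hd r).mul (Real.hasDerivAt_rpow_const (p := s) (Or.inl hr))).congr_deriv ?_
      ring

theorem cut_pos {φ : ℝ → ℝ} (c : Continuous φ) (hn : ∀ r, 0 ≤ φ r) (h2 : φ 2 = 1)
    (h0 : ∀ r, r ∉ Set.Icc (1:ℝ) 3 → φ r = 0) (s : ℝ) :
    0 < ∫ r, φ r * r ^ s := by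
  refine (cut_rpow_cont c h0 s).integral_pos_of_hasCompactSupport_nonneg_nonzero
    (cut_compact fun r hr => by simp [h0 r hr]) ?_ (x := 2) ?_
  · intro r
    by_cases hr : r ∈ Set.Icc (1:ℝ) 3
    · have : 0 < r := by linarith [hr.1]
      exact mul_nonneg (hn r) (Real.rpow_nonneg this.le _)
    · simp [h0 r hr]
  · rw [h2, one_mul]; positivity

theorem ioiPow_int {g : ℝ → ℝ} (hg : Continuous g) (hc : HasCompactSupport g) (n : ℕ) :
    Integrable (fun r : Set.Ioi (0:ℝ) => g r) (Measure.volumeIoiPow n) ∧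
    ∫ r : Set.Ioi (0:ℝ), g r ∂(Measure.volumeIoiPow n) = ∫ r in Set.Ioi (0:ℝ), r ^ n * g r := by
  constructor
  · rw [Measure.volumeIoiPow, integrable_withDensity_iff_integrable_smul']
    · have h1 : IntegrableOn (fun r => r ^ n * g r) (Set.Ioi 0) :=
        (((continuous_pow n).mul hg).integrable_of_hasCompactSupport hc.mul_left).integrableOn
      rw [integrableOn_iff_comap_subtypeVal measurableSet_Ioi] at h1
      refine h1.congr (Filter.Eventually.of_forall ?_)
      rintro ⟨x, hx : 0 < x⟩
      simp (disch := positivity) [ENNReal.toReal_ofReal]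
    · fun_prop
    · simp
  · simp only [Measure.volumeIoiPow, ENNReal.ofReal]
    rw [integral_withDensity_eq_integral_smul,
        integral_subtype_comap measurableSet_Ioi fun a ↦ Real.toNNReal (a ^ n) • g a,
        setIntegral_congr_fun measurableSet_Ioi fun x hx ↦ ?_]
    · rw [NNReal.smul_def, Real.coe_toNNReal _ (pow_nonneg hx.out.le _), smul_eq_mul]
    · exact (measurable_subtype_coe.pow_const _).real_toNNReal

theorem polar_sep {n : ℕ} {F : Euc n → ℝ} {a b : ℝ → ℝ} {A B : Sph n → ℝ}
    (ca : Continuous a) (sa : HasCompactSupport a) (cb : Continuous b) (sb : HasCompactSupport b)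
    (cA : Continuous A) (cB : Continuous B)
    (h : ∀ (x : Sph n) (r : ℝ), 0 < r → F (r • x.1) = A x * a r + B x * b r) :
    ∫ z, F z = (∫ x, A x ∂(sphMeasure n)) * (∫ r in Set.Ioi (0:ℝ), r ^ n * a r) +
      (∫ x, B x ∂(sphMeasure n)) * (∫ r in Set.Ioi (0:ℝ), r ^ n * b r) := by
  have h1 : ∫ z, F z = ∫ z : ({(0 : Euc n)}ᶜ : Set (Euc n)), F z ∂((volume : Measure (Euc n)).comap (Subtype.val)) := by
    rw [integral_subtype_comap (measurableSet_singleton _).compl, restrict_zero_compl]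
  have hd : Module.finrank ℝ (Euc n) - 1 = n := by simp
  have h2 := (volume : Measure (Euc n)).measurePreserving_homeomorphUnitSphereProd
  rw [hd] at h2
  have h3 := h2.integral_comp (Homeomorph.measurableEmbedding _)
    (fun q : Sph n × Set.Ioi (0:ℝ) => A q.1 * a q.2 + B q.1 * b q.2)
  have h4 : ∀ z : ({(0 : Euc n)}ᶜ : Set (Euc n)),
      F z = (fun q : Sph n × Set.Ioi (0:ℝ) => A q.1 * a q.2 + B q.1 * b q.2)
        (homeomorphUnitSphereProd (Euc n) z) := by
    intro z
    have h5 : z = (homeomorphUnitSphereProd (Euc n)).symm (homeomorphUnitSphereProd (Euc n) z) := by simp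
    conv_lhs => rw [h5]
    obtain ⟨x, r⟩ := homeomorphUnitSphereProd (Euc n) z
    rw [homeo_symm_eq, h x r.1 r.2]
  rw [h1]
  simp_rw [h4]
  rw [h3]
  have ia := ioiPow_int ca sa n
  have ib := ioiPow_int cb sb n
  have iA : Integrable A (sphMeasure n) := sph_int cA
  have iB : Integrable B (sphMeasure n) := sph_int cB
  change ∫ q : Sph n × Set.Ioi (0:ℝ), A q.1 * a q.2 + B q.1 * b q.2 ∂((sphMeasure n).prod (Measure.volumeIoiPow n)) = _
  rw [integral_add (iA.mul_prod ia.1) (iB.mul_prod ib.1), integral_prod_mul A (fun r : Set.Ioi (0:ℝ) => a r),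
    integral_prod_mul B (fun r : Set.Ioi (0:ℝ) => b r), ia.2, ib.2]

theorem integral_fderiv_zero {n : ℕ} {Z : Euc n → ℝ} {W : Euc n → Euc n}
    (hZ : ∀ z, HasFDerivAt Z (innerSL ℝ (W z)) z) (cW : Continuous W) (sZ : HasCompactSupport Z)
    (sW : HasCompactSupport W) (k : Fin (n+1)) : ∫ z, W z k = 0 := by
  have cZ : Continuous Z := continuous_iff_continuousAt.2 fun z => (hZ z).continuousAt
  have hf : ∀ z, fderiv ℝ Z z (EuclideanSpace.single k 1) = W z k := by
    intro z; rw [(hZ z).fderiv]; simp [EuclideanSpace.inner_single_right]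
  have cWk : Continuous fun z => W z k := by fun_prop
  have sWk : HasCompactSupport fun z => W z k := sW.comp_left (g := fun w : Euc n => w k) (by simp)
  have h := integral_mul_fderiv_eq_neg_fderiv_mul_of_integrable (μ := (volume : Measure (Euc n)))
    (f := fun _ => (1:ℝ)) (g := Z) (v := EuclideanSpace.single k 1) ?_ ?_ ?_ ?_ ?_
  · simpa [hf] using h
  · simp
  · simp only [hf, one_mul]; exact cWk.integrable_of_hasCompactSupport sWk
  · simp only [one_mul]; exact cZ.integrable_of_hasCompactSupport sZ
  · intro x _; exact differentiableAt_const _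
  · intro x _; exact (hZ x).differentiableAt

theorem sph_ibp {n : ℕ} {u : Euc n → ℝ} {U : Euc n → Euc n} {m : ℝ}
    (hu : ∀ x, x ≠ 0 → HasFDerivAt u (innerSL ℝ (U x)) x)
    (cU : ∀ x, x ≠ 0 → ContinuousAt U x)
    (hm : ∀ c : ℝ, 0 < c → ∀ x, x ≠ 0 → u (c • x) = c ^ m * u x) (k : Fin (n+1)) :
    ∫ x : Sph n, U x k ∂(sphMeasure n) = (n + m) * ∫ x : Sph n, u x * x.1 k ∂(sphMeasure n) := by
  have hU : ∀ c : ℝ, 0 < c → ∀ x, x ≠ 0 → U (c • x) = c ^ (m - 1) • U x := by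
    intro c hc x hx
    have hcx : c • x ≠ 0 := smul_ne_zero hc.ne' hx
    have h1 : HasFDerivAt (fun y => u (c • y)) ((innerSL ℝ (U (c • x))).comp
        (c • ContinuousLinearMap.id ℝ (Euc n))) x :=
      HasFDerivAt.comp x (hu _ hcx) ((hasFDerivAt_id x).const_smul c)
    have h2 : HasFDerivAt (fun y => u (c • y)) (c ^ m • innerSL ℝ (U x)) x := by
      refine ((hu x hx).const_mul (c ^ m)).congr_of_eventuallyEq ?_
      filter_upwards [Body.ev_ne hx] with y hy
      exact hm c hc y hy
    have h3 := h1.unique h2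
    refine ext_inner_right ℝ fun v => ?_
    have h4 := congrArg (fun f => f v) h3
    simp only [ContinuousLinearMap.comp_apply, _root_.smul_apply, ContinuousLinearMap.id_apply, innerSL_apply_apply, inner_smul_right, smul_eq_mul] at h4
    rw [inner_smul_left, Real.rpow_sub_one hc.ne', conj_trivial]
    field_simp
    linarith
  obtain ⟨φ, φ', c, c', hd, hn, h2, h0⟩ := exists_cut
  let W : Euc n → Euc n := fun z => φ ‖z‖ • U z + (φ' ‖z‖ * u z * ‖z‖⁻¹) • z
  let Z : Euc n → ℝ := fun z => φ ‖z‖ * u z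
  have near : ∀ᶠ z : Euc n in 𝓝 0, φ ‖z‖ = 0 ∧ φ' ‖z‖ = 0 := by
    filter_upwards [ball_mem_nhds (0 : Euc n) zero_lt_one] with z hz
    exact h0 _ fun h => by have := h.1; simp at hz; linarith
  have hZ : ∀ z, HasFDerivAt Z (innerSL ℝ (W z)) z := by
    intro z
    by_cases hz : z = 0
    · subst hz
      have e : Z =ᶠ[𝓝 0] fun _ => 0 := by
        filter_upwards [near] with z hz
        simp [Z, hz.1]
      have : W 0 = 0 := by simp [W, (h0 0 (by simp)).1]
      rw [this]
      simpa using (hasFDerivAt_const (0:ℝ) (0 : Euc n)).congr_of_eventuallyEq e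
    · have h5 := ((hd ‖z‖).comp_hasFDerivAt z (Body.norm_hasFDerivAt hz)).mul (hu z hz)
      refine h5.congr_fderiv ?_
      ext v
      simp [W]
      ring
  have cW : Continuous W := by
    rw [continuous_iff_continuousAt]
    intro z
    by_cases hz : z = 0
    · subst hz
      have e : W =ᶠ[𝓝 0] fun _ => 0 := by
        filter_upwards [near] with z hz
        simp [W, hz.1, hz.2]
      exact continuousAt_const.congr e.symm
    · have n0 : ‖z‖ ≠ 0 := norm_ne_zero_iff.2 hz
      have a1 : ContinuousAt (fun z : Euc n => φ ‖z‖) z := (c.comp continuous_norm).continuousAt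
      have a2 : ContinuousAt (fun z : Euc n => φ' ‖z‖) z := (c'.comp continuous_norm).continuousAt
      exact (a1.smul (cU z hz)).add (((a2.mul (hu z hz).continuousAt).mul
        (continuous_norm.continuousAt.inv₀ n0)).smul continuousAt_id)
  have out : ∀ z : Euc n, z ∉ closedBall (0 : Euc n) 3 → φ ‖z‖ = 0 ∧ φ' ‖z‖ = 0 := by
    intro z hz
    exact h0 _ fun h => hz (by simpa using h.2)
  have sZ : HasCompactSupport Z := HasCompactSupport.intro (isCompact_closedBall (0 : Euc n) 3)
    fun z hz => by simp [Z, (out z hz).1]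
  have sW : HasCompactSupport W := HasCompactSupport.intro (isCompact_closedBall (0 : Euc n) 3)
    fun z hz => by simp [W, (out z hz).1, (out z hz).2]
  have hI := integral_fderiv_zero hZ cW sZ sW k
  have cu : Continuous fun x : Sph n => u x := Body.sph_cont fun x hx => (hu x (sphere_ne hx)).continuousAt
  have cUs : Continuous fun x : Sph n => U x := Body.sph_cont fun x hx => cU x (sphere_ne hx)
  have cUk : Continuous fun x : Sph n => U x k := (EuclideanSpace.proj k : Euc n →L[ℝ] ℝ).continuous.comp cUs
  have cxk : Continuous fun x : Sph n => x.1 k :=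
    (EuclideanSpace.proj k : Euc n →L[ℝ] ℝ).continuous.comp continuous_subtype_val
  have hP := polar_sep (F := fun z => W z k) (a := fun r => φ r * r ^ (m - 1)) (b := fun r => φ' r * r ^ m)
    (A := fun x : Sph n => U x k) (B := fun x : Sph n => u x * x.1 k)
    (cut_rpow_cont c (fun r hr => (h0 r hr).1) _) (cut_compact fun r hr => by simp [(h0 r hr).1])
    (cut_rpow_cont c' (fun r hr => (h0 r hr).2) _) (cut_compact fun r hr => by simp [(h0 r hr).2])
    cUk (cu.mul cxk) ?_
  · rw [hI, cut_radial (fun r hr => (h0 r hr).1), cut_radial (fun r hr => (h0 r hr).2),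
      cut_ibp c c' hd h0] at hP
    have hp := cut_pos c hn h2 (fun r hr => (h0 r hr).1) ((n:ℝ) + (m - 1))
    have e : (n:ℝ) + m - 1 = n + (m - 1) := by ring
    rw [e] at hP
    set J := ∫ r, φ r * r ^ ((n:ℝ) + (m - 1))
    have : J * ((∫ x : Sph n, U x k ∂(sphMeasure n)) - (n + m) * ∫ x : Sph n, u x * x.1 k ∂(sphMeasure n)) = 0 := by
      linarith
    have := (mul_eq_zero.1 this).resolve_left hp.ne'
    linarith
  · intro x r hr
    have hx := sphere_ne x.2
    have hnx : ‖(x : Euc n)‖ = 1 := by simp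
    have h2 : ‖r • (x : Euc n)‖ = r := by
      rw [norm_smul, hnx, Real.norm_eq_abs, abs_of_pos hr, mul_one]
    simp only [W]
    rw [h2, hU r hr _ hx, hm r hr _ hx]
    simp only [PiLp.add_apply, PiLp.smul_apply, smul_eq_mul]
    field_simp

open MeasureTheory Matrix Metric
open scoped RealInnerProductSpace
open scoped ENNReal
open scoped Topology

namespace Body
variable {n : ℕ} {H : Euc n → ℝ}

noncomputable def Uk (n : ℕ) (H : Euc n → ℝ) (p a : ℝ) (k : Fin (n+1)) (x : Euc n) : Euc n :=
  (H x ^ (p + 1)) • hessL n H x (omg n H a k x) +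
    (‖gradient H x‖ ^ a * gradient H x k) • (((p + 1) * H x ^ p) • gradient H x)

theorem Uk_deriv (b : Body n H) (p a : ℝ) (k : Fin (n+1)) {x : Euc n} (hx : x ≠ 0) :
    HasFDerivAt (fun y => H y ^ (p + 1) * (‖gradient H y‖ ^ a * gradient H y k))
      (innerSL ℝ (Uk n H p a k x)) x := by
  have h1 := ((b.hasFDerivAt hx).rpow_const (p := p + 1) (Or.inl (b.hpos hx).ne')).mul
    (b.fk_strict hx a k).hasFDerivAt
  refine h1.congr_fderiv ?_
  unfold Uk
  ext v
  simp

theorem Uk_cont (b : Body n H) (p a : ℝ) (k : Fin (n+1)) {x : Euc n} (hx : x ≠ 0) :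
    ContinuousAt (Uk n H p a k) x := by
  have c0 := (b.contDiffAt hx).continuousAt
  have cp : ∀ s : ℝ, ContinuousAt (fun y => H y ^ s) x := fun s =>
    c0.rpow_const (Or.inl (b.hpos hx).ne')
  have c1 := (b.fk_strict hx a k).hasFDerivAt.continuousAt
  have c3 := (b.grad_contDiffAt hx).continuousAt
  have cL := (b.hessL_contDiffAt hx).continuousAt
  unfold Uk
  exact ((cp (p+1)).smul (cL.clm_apply (b.omg_cont hx a k))).add
    (c1.smul ((continuousAt_const.mul (cp p)).smul c3))

theorem Uk_sum (b : Body n H) (p a : ℝ) {x : Euc n} (hx : x ≠ 0) :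
    ∑ k, Uk n H p a k x k = H x ^ p * ‖gradient H x‖ ^ a * (H x * trL n H x) +
      a * (H x ^ p * ‖gradient H x‖ ^ a * (H x *
        (⟪hessL n H x (gradient H x), gradient H x⟫ / ‖gradient H x‖ ^ 2))) +
      (p + 1) * (H x ^ p * ‖gradient H x‖ ^ a * ‖gradient H x‖ ^ 2) := by
  have h0 := b.r_pos hx
  have hH := b.hpos hx
  set ρ := ‖gradient H x‖ ^ a
  set c := a * (ρ / ‖gradient H x‖ ^ 2) with hc
  set X := gradient H x with hX
  set L := hessL n H x with hL
  have h1 : ∀ k, Uk n H p a k x k = (H x ^ p * H x * ρ) *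
      ⟪L (EuclideanSpace.single k 1), EuclideanSpace.single k (1:ℝ)⟫ +
      (H x ^ p * H x * c) * (X k * (L X) k) + ((p + 1) * H x ^ p * ρ) * (X k) ^ 2 := by
    intro k
    have h2 : ∀ v : Euc n, ⟪v, EuclideanSpace.single k (1:ℝ)⟫ = v k := by
      intro v; simp [EuclideanSpace.inner_single_right]
    have h4 : omg n H a k x = ρ • EuclideanSpace.single k (1:ℝ) + (X k * c) • X := by
      unfold omg; rw [smul_smul]
    unfold Uk
    rw [h4, map_add, map_smul, map_smul, h2, Real.rpow_add_one hH.ne']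
    simp only [PiLp.add_apply, PiLp.smul_apply, smul_eq_mul]
    ring
  simp_rw [h1]
  rw [Finset.sum_add_distrib, Finset.sum_add_distrib, ← Finset.mul_sum, ← Finset.mul_sum,
    ← Finset.mul_sum]
  have h5 : ∑ k, X k * (L X) k = ⟪L X, X⟫ := by
    simp [PiLp.inner_apply]
  have h6 : ∑ k, (X k) ^ 2 = ‖X‖ ^ 2 := by
    rw [EuclideanSpace.norm_sq_eq]; simp
  rw [h5, h6, trL, ← hL, hc]
  field_simp

theorem ibp (b : Body n H) (p a : ℝ) :
    (∫ x : Sph n, H x ^ p * ‖gradient H x‖ ^ a * (H x * trL n H x) ∂(sphMeasure n)) +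
      a * (∫ x : Sph n, H x ^ p * ‖gradient H x‖ ^ a * (H x *
        (⟪hessL n H x (gradient H x), gradient H x⟫ / ‖gradient H x‖ ^ 2)) ∂(sphMeasure n)) +
      (p + 1) * (∫ x : Sph n, H x ^ p * ‖gradient H x‖ ^ a * ‖gradient H x‖ ^ 2 ∂(sphMeasure n)) =
    (n + (p + 1)) * ∫ x : Sph n, H x ^ p * ‖gradient H x‖ ^ a * H x ^ 2 ∂(sphMeasure n) := by
  have cr : Continuous fun x : Sph n => ‖gradient H x‖ ^ a :=
    sph_cont (g := fun x => ‖gradient H x‖ ^ a)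
      fun x hx => (b.rpow_strict (sphere_ne hx) a).hasFDerivAt.continuousAt
  have cX : Continuous fun x : Sph n => gradient H x :=
    sph_cont fun x hx => (b.grad_contDiffAt (sphere_ne hx)).continuousAt
  have cH : Continuous fun x : Sph n => H x :=
    sph_cont fun x hx => (b.contDiffAt (sphere_ne hx)).continuousAt
  have cp : ∀ s : ℝ, Continuous fun x : Sph n => H x ^ s := fun s =>
    cH.rpow_const fun x => Or.inl (b.hpos (sphere_ne x.2)).ne'
  have cL : Continuous fun x : Sph n => hessL n H x :=
    sph_cont fun x hx => (b.hessL_contDiffAt (sphere_ne hx)).continuousAt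
  have cT : Continuous fun x : Sph n => trL n H x :=
    sph_cont fun x hx => b.trL_cont (sphere_ne hx)
  have cQ : Continuous fun x : Sph n =>
      ⟪hessL n H x (gradient H x), gradient H x⟫ / ‖gradient H x‖ ^ 2 :=
    ((cL.clm_apply cX).inner cX).div (cX.norm.pow 2) fun x => (pow_pos (b.r_pos (sphere_ne x.2)) 2).ne.symm
  have cu : ∀ k, Continuous fun x : Sph n => H x ^ (p + 1) * (‖gradient H x‖ ^ a * gradient H x k) :=
    fun k => sph_cont (g := fun x => H x ^ (p + 1) * (‖gradient H x‖ ^ a * gradient H x k))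
      fun x hx => (b.Uk_deriv p a k (sphere_ne hx)).continuousAt
  have cU : ∀ k, Continuous fun x : Sph n => Uk n H p a k x := fun k =>
    sph_cont fun x hx => b.Uk_cont p a k (sphere_ne hx)
  have cxk : ∀ k, Continuous fun x : Sph n => x.1 k := fun k =>
    (EuclideanSpace.proj k : Euc n →L[ℝ] ℝ).continuous.comp continuous_subtype_val
  have hk : ∀ k, _ := fun k => sph_ibp (m := p + 1) (fun x hx => b.Uk_deriv p a k hx)
    (fun x hx => b.Uk_cont p a k hx) (by
      intro c hc x hx
      rw [b.homog c hc, b.grad_homog hc hx, Real.mul_rpow hc.le (b.hpos hx).le]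
      ring) k
  have hs := Finset.sum_congr (rfl : (Finset.univ : Finset (Fin (n+1))) = _) fun k _ => hk k
  rw [← Finset.mul_sum, ← integral_finsetSum, ← integral_finsetSum] at hs
  · have e1 : ∀ x : Sph n, ∑ k, H x ^ (p + 1) * (‖gradient H x‖ ^ a * gradient H x k) * x.1 k =
        H x ^ p * ‖gradient H x‖ ^ a * H x ^ 2 := by
      intro x
      have hx := sphere_ne x.2
      have h5 : ∑ k, gradient H x k * x.1 k = H x := by
        rw [← b.euler hx]
        simp [PiLp.inner_apply, mul_comm, -inner_gradient_left]
      have : ∀ k, H x ^ (p + 1) * (‖gradient H x‖ ^ a * gradient H x k) * x.1 k =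
          (H x ^ (p + 1) * ‖gradient H x‖ ^ a) * (gradient H x k * x.1 k) := fun k => by ring
      simp_rw [this]
      rw [← Finset.mul_sum, h5, Real.rpow_add_one (b.hpos hx).ne']
      ring
    simp_rw [e1] at hs
    have e2 : ∀ x : Sph n, _ := fun x => b.Uk_sum p a (sphere_ne x.2)
    simp_rw [e2] at hs
    rw [← hs, integral_add, integral_add, integral_const_mul, integral_const_mul]
    · exact sph_int (((cp p).mul cr).mul (cH.mul cT))
    · exact (sph_int (((cp p).mul cr).mul (cH.mul cQ))).const_mul a
    · exact (sph_int (((cp p).mul cr).mul (cH.mul cT))).add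
        ((sph_int (((cp p).mul cr).mul (cH.mul cQ))).const_mul a)
    · exact (sph_int (((cp p).mul cr).mul (cX.norm.pow 2))).const_mul (p+1)
  · intro k _
    exact sph_int ((cu k).mul (cxk k))
  · intro k _
    exact sph_int ((EuclideanSpace.proj k : Euc n →L[ℝ] ℝ).continuous.comp (cU k))

theorem sphGrad_H (b : Body n H) {x : Euc n} (hx : x ∈ sphere (0 : Euc n) 1) :
    sphGrad n H x = gradient H x - H x • x := by
  have h0 := sphere_ne hx
  have hn : ‖x‖ = 1 := by simpa using hx
  have h1 : HasFDerivAt (fun y => H (‖y‖⁻¹ • y)) (innerSL ℝ (gradient H x - H x • x)) x := by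
    have h2 := (b.hasFDerivAt h0).mul
      ((hasDerivAt_inv (norm_ne_zero_iff.2 h0)).comp_hasFDerivAt x (norm_hasFDerivAt h0))
    have h3 := h2.congr_of_eventuallyEq (f₁ := fun y => H (‖y‖⁻¹ • y)) (by
      filter_upwards [ev_ne h0] with y hy
      rw [b.homog _ (inv_pos.2 (norm_pos_iff.2 hy))]
      simp [mul_comm])
    refine h3.congr_fderiv ?_
    ext v
    simp [hn, -inner_gradient_left]
    ring
  exact HasGradientAt.gradient h1

theorem sphGrad_log (b : Body n H) {x : Euc n} (hx : x ∈ sphere (0 : Euc n) 1) :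
    sphGrad n (fun y => Real.log ‖gradient H y‖) x =
      (‖gradient H x‖ ^ 2)⁻¹ • hessL n H x (gradient H x) := by
  have h0 := sphere_ne hx
  have hr := b.r_pos h0
  have h1 : HasFDerivAt (fun y => Real.log ‖gradient H (‖y‖⁻¹ • y)‖)
      (innerSL ℝ ((‖gradient H x‖ ^ 2)⁻¹ • hessL n H x (gradient H x))) x := by
    have h2 := (b.r_strict h0).hasFDerivAt.log hr.ne'
    have h3 := h2.congr_of_eventuallyEq (f₁ := fun y => Real.log ‖gradient H (‖y‖⁻¹ • y)‖) (by
      filter_upwards [ev_ne h0] with y hy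
      rw [b.grad_homog (inv_pos.2 (norm_pos_iff.2 hy)) hy])
    refine h3.congr_fderiv ?_
    ext v
    simp [inner_smul_left]
    field_simp
  exact HasGradientAt.gradient h1

theorem final (b : Body n H) (p q α : ℝ) (hα : α = q - (n : ℝ) - 1)
    (heq : ∀ x ∈ sphere (0 : Euc n) 1,
      H x ^ (p - 1) * ‖gradient H x‖ ^ ((n : ℝ) + 1 - q) * gaussCurv n H x = 1) :
    ((n : ℝ) + 1 + p) * ∫ x : sphere (0 : Euc n) 1,
          volDens n H x * (‖gradient H x‖ ^ (2 * α) * ‖sphGrad n H x‖ ^ 2) ∂(sphMeasure n)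
      ≤ α * (α + 1) * (∫ x : sphere (0 : Euc n) 1,
            volDens n H x * (‖gradient H x‖ ^ (2 * α) *
              ⟪sphGrad n (fun y => Real.log ‖gradient H y‖) x, H x • sphGrad n H x⟫)
            ∂(sphMeasure n))
        + (n : ℝ) * ‖∫ x : sphere (0 : Euc n) 1,
              volDens n H x • (‖gradient H x‖ ^ α • gradient H x) ∂(sphMeasure n)‖ ^ 2
            / ∫ x : sphere (0 : Euc n) 1, volDens n H x ∂(sphMeasure n) := by
  have cr : Continuous fun x : Sph n => ‖gradient H x‖ ^ α :=
    sph_cont (g := fun x => ‖gradient H x‖ ^ α)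
      fun x hx => (b.rpow_strict (sphere_ne hx) α).hasFDerivAt.continuousAt
  have cX : Continuous fun x : Sph n => gradient H x :=
    sph_cont fun x hx => (b.grad_contDiffAt (sphere_ne hx)).continuousAt
  have cH : Continuous fun x : Sph n => H x :=
    sph_cont fun x hx => (b.contDiffAt (sphere_ne hx)).continuousAt
  have cp : ∀ s : ℝ, Continuous fun x : Sph n => H x ^ s := fun s =>
    cH.rpow_const fun x => Or.inl (b.hpos (sphere_ne x.2)).ne'
  have cL : Continuous fun x : Sph n => hessL n H x :=
    sph_cont fun x hx => (b.hessL_contDiffAt (sphere_ne hx)).continuousAt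
  have cT : Continuous fun x : Sph n => trL n H x :=
    sph_cont fun x hx => b.trL_cont (sphere_ne hx)
  have cQ : Continuous fun x : Sph n =>
      ⟪hessL n H x (gradient H x), gradient H x⟫ / ‖gradient H x‖ ^ 2 :=
    ((cL.clm_apply cX).inner cX).div (cX.norm.pow 2) fun x => (pow_pos (b.r_pos (sphere_ne x.2)) 2).ne.symm
  have vd : ∀ x : Sph n, volDens n H x * (‖gradient H x‖ ^ α) ^ 2 = H x ^ p * ‖gradient H x‖ ^ α := by
    intro x
    have hx := sphere_ne x.2
    have hH := b.hpos hx
    have hr := b.r_pos hx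
    have h1 := heq x x.2
    have hs : sigman n H x = H x ^ (p - 1) * ‖gradient H x‖ ^ (-α) := by
      have e : -α = (n:ℝ) + 1 - q := by rw [hα]; ring
      rw [e]
      have hσ : sigman n H x ≠ 0 := by
        intro h; rw [gaussCurv, h] at h1; simp at h1
      rw [gaussCurv] at h1
      field_simp at h1
      linarith
    have hρ : ‖gradient H (x : Euc n)‖ ^ α ≠ 0 := (Real.rpow_pos_of_pos hr α).ne'
    rw [volDens, hs, Real.rpow_neg hr.le, Real.rpow_sub_one hH.ne']
    field_simp
  have r2 : ∀ x : Sph n, ‖gradient H x‖ ^ (2 * α) = (‖gradient H x‖ ^ α) ^ 2 := by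
    intro x
    rw [mul_comm, Real.rpow_mul (norm_nonneg _)]; norm_num
  have hP := b.poincare_sum α
  have hB := b.ibp p α
  set V := (n : ℝ) * ‖∫ x : Sph n,
              volDens n H x • (‖gradient H x‖ ^ α • gradient H x) ∂(sphMeasure n)‖ ^ 2
            / ∫ x : Sph n, volDens n H x ∂(sphMeasure n)
  have e1 : (∫ x : Sph n, volDens n H x * (‖gradient H x‖ ^ (2 * α) * ‖sphGrad n H x‖ ^ 2) ∂(sphMeasure n))
      = (∫ x : Sph n, H x ^ p * ‖gradient H x‖ ^ α * ‖gradient H x‖ ^ 2 ∂(sphMeasure n)) -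
        ∫ x : Sph n, H x ^ p * ‖gradient H x‖ ^ α * H x ^ 2 ∂(sphMeasure n) := by
    have i1 : Integrable (fun x : Sph n => H x ^ p * ‖gradient H x‖ ^ α * ‖gradient H x‖ ^ 2)
        (sphMeasure n) := sph_int (((cp p).mul cr).mul (cX.norm.pow 2))
    have i2 : Integrable (fun x : Sph n => H x ^ p * ‖gradient H x‖ ^ α * H x ^ 2)
        (sphMeasure n) := sph_int (((cp p).mul cr).mul (cH.pow 2))
    rw [← integral_sub i1 i2]
    congr 1
    ext x
    have hn : ‖(x : Euc n)‖ = 1 := by simp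
    rw [r2, ← mul_assoc, vd, b.sphGrad_H x.2, norm_sub_sq_real, inner_smul_right, b.euler (sphere_ne x.2),
      norm_smul, hn, mul_one, Real.norm_eq_abs, sq_abs]
    ring
  have e2 : (∫ x : Sph n, volDens n H x * (‖gradient H x‖ ^ (2 * α) *
              ⟪sphGrad n (fun y => Real.log ‖gradient H y‖) x, H x • sphGrad n H x⟫) ∂(sphMeasure n)) =
      ∫ x : Sph n, H x ^ p * ‖gradient H x‖ ^ α * (H x *
        (⟪hessL n H x (gradient H x), gradient H x⟫ / ‖gradient H x‖ ^ 2)) ∂(sphMeasure n) := by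
    congr 1
    ext x
    have hx := sphere_ne x.2
    have h0 : ⟪hessL n H x (gradient H x), (x : Euc n)⟫ = 0 := by
      rw [b.hessL_symm hx, b.hessL_self hx, inner_zero_right]
    rw [r2, ← mul_assoc, vd, b.sphGrad_H x.2, b.sphGrad_log x.2, inner_smul_left, inner_smul_right,
      inner_sub_right, inner_smul_right, h0, conj_trivial]
    ring
  have e3 : (∫ x : Sph n, volDens n H x * ((‖gradient H x‖ ^ α) ^ 2 * ‖gradient H x‖ ^ 2) ∂(sphMeasure n)) =
      ∫ x : Sph n, H x ^ p * ‖gradient H x‖ ^ α * ‖gradient H x‖ ^ 2 ∂(sphMeasure n) := by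
    congr 1
    ext x
    rw [← mul_assoc, vd]
  have e4 : (∫ x : Sph n, volDens n H x * (H x * ((‖gradient H x‖ ^ α) ^ 2 * (trL n H x + (2 * α + α ^ 2) *
        (⟪hessL n H x (gradient H x), gradient H x⟫ / ‖gradient H x‖ ^ 2)))) ∂(sphMeasure n)) =
      (∫ x : Sph n, H x ^ p * ‖gradient H x‖ ^ α * (H x * trL n H x) ∂(sphMeasure n)) + (2 * α + α ^ 2) *
      ∫ x : Sph n, H x ^ p * ‖gradient H x‖ ^ α * (H x *
        (⟪hessL n H x (gradient H x), gradient H x⟫ / ‖gradient H x‖ ^ 2)) ∂(sphMeasure n) := by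
    have i1 : Integrable (fun x : Sph n => H x ^ p * ‖gradient H x‖ ^ α * (H x * trL n H x))
        (sphMeasure n) := sph_int (((cp p).mul cr).mul (cH.mul cT))
    have i2 : Integrable (fun x : Sph n => H x ^ p * ‖gradient H x‖ ^ α * (H x *
        (⟪hessL n H x (gradient H x), gradient H x⟫ / ‖gradient H x‖ ^ 2)))
        (sphMeasure n) := sph_int (((cp p).mul cr).mul (cH.mul cQ))
    rw [← integral_const_mul, ← integral_add i1 (i2.const_mul _)]
    congr 1
    ext x
    have : ∀ T Q : ℝ, volDens n H x * (H x * ((‖gradient H x‖ ^ α) ^ 2 * (T + (2 * α + α ^ 2) * Q))) =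
        (volDens n H x * (‖gradient H x‖ ^ α) ^ 2) * (H x * (T + (2 * α + α ^ 2) * Q)) := fun T Q => by ring
    rw [this, vd]
    ring
  rw [e3, e4] at hP
  rw [e1, e2]
  linarith

end Body

/-- For a smooth, strictly convex body `K ⊂ ℝ^{n+1}` (`n ≥ 2`) with the
origin in its interior satisfying `h^{p-1}|Dh|^{n+1-q}𝒦 = 1` on `S^n`, with `α = q - n - 1`:
`(n+1+p) ∫ r^{2α}|∇̄h|² dV ≤ α(α+1) ∫ r^{2α} ⟨∇̄ log r, h∇̄h⟩ dV + n|∫ r^α X dV|²/∫ dV`. -/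
theorem key_integral_inequality
    (n : ℕ) (hn : 2 ≤ n) (p q α : ℝ) (hα : α = q - (n : ℝ) - 1)
    (H : Euc n → ℝ) (K : Set (Euc n))
    (hK : K = {y : Euc n | ∀ x : Euc n, ⟪x, y⟫ ≤ H x})
    (hhomog : ∀ c : ℝ, 0 < c → ∀ x : Euc n, H (c • x) = c * H x)
    (hconv : ConvexOn ℝ Set.univ H)
    (hsmooth : ContDiffOn ℝ (⊤ : ℕ∞) H {(0 : Euc n)}ᶜ)
    (hpos : ∀ x ∈ sphere (0 : Euc n) 1, 0 < H x)
    (hposdef : ∀ x ∈ sphere (0 : Euc n) 1, (bmat n H x).PosDef)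
    (heq : ∀ x ∈ sphere (0 : Euc n) 1,
      H x ^ (p - 1) * ‖gradient H x‖ ^ ((n : ℝ) + 1 - q) * gaussCurv n H x = 1) :
    ((n : ℝ) + 1 + p) * ∫ x : sphere (0 : Euc n) 1,
          volDens n H x * (‖gradient H x‖ ^ (2 * α) * ‖sphGrad n H x‖ ^ 2) ∂(sphMeasure n)
      ≤ α * (α + 1) * (∫ x : sphere (0 : Euc n) 1,
            volDens n H x * (‖gradient H x‖ ^ (2 * α) *
              ⟪sphGrad n (fun y => Real.log ‖gradient H y‖) x, H x • sphGrad n H x⟫)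
            ∂(sphMeasure n))
        + (n : ℝ) * ‖∫ x : sphere (0 : Euc n) 1,
              volDens n H x • (‖gradient H x‖ ^ α • gradient H x) ∂(sphMeasure n)‖ ^ 2
            / ∫ x : sphere (0 : Euc n) 1, volDens n H x ∂(sphMeasure n) := by
  have b : Body n H := ⟨hhomog, hconv, hsmooth, hpos, hposdef⟩
  exact b.final p q α hα heq
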